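/- arXiv:2110.03449 — 2 statements merged into one kernel-verified Lean document; each statement's English description precedes it below -/
import Mathlib

section
/- (Kellogg) Let D be a bounded domain in ℝ^m, m ≥ 2, and let u : closure(D) → ℝ be continuous. If for each x ∈ D there exists a radius r(x) > 0 such that the closure of B_{r(x)}(x) is contained in D and M(x, r(x), u) = u(x), then u is harmonic in D. -/
open MeasureTheory Metric

/-- The spherical mean `M(x, r, u) = (1/ω_m) ∫_{S_1(0)} u(x + r y) dS_y`,
realized as the average of `y ↦ u (x + r • y)` over the unit sphere with respect to
the `(m-1)`-dimensional Hausdorff (surface-area) measure. -/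
noncomputable def sphereMean (m : ℕ) (u : EuclideanSpace ℝ (Fin m) → ℝ)
    (x : EuclideanSpace ℝ (Fin m)) (r : ℝ) : ℝ :=
  ⨍ y in sphere (0 : EuclideanSpace ℝ (Fin m)) 1, u (x + r • y) ∂μH[(m : ℝ) - 1]

/-- The iterated spherical mean
`I(x, r', r, u) = (1/ω_m²) ∫_{S_1(0)} ∫_{S_1(0)} u(x + r' y + r z) dS_z dS_y`. -/
noncomputable def iterSphereMean (m : ℕ) (u : EuclideanSpace ℝ (Fin m) → ℝ)
    (x : EuclideanSpace ℝ (Fin m)) (r' r : ℝ) : ℝ :=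
  ⨍ y in sphere (0 : EuclideanSpace ℝ (Fin m)) 1,
    ⨍ z in sphere (0 : EuclideanSpace ℝ (Fin m)) 1,
      u (x + r' • y + r • z) ∂μH[(m : ℝ) - 1] ∂μH[(m : ℝ) - 1]

/-- The Laplacian `∇²u (x) = ∑ i ∂²u/∂x_i² (x)`. -/
noncomputable def laplacian (m : ℕ) (u : EuclideanSpace ℝ (Fin m) → ℝ)
    (x : EuclideanSpace ℝ (Fin m)) : ℝ :=
  ∑ i : Fin m, fderiv ℝ (fun y => fderiv ℝ u y (EuclideanSpace.single i 1)) x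
    (EuclideanSpace.single i 1)

open scoped Laplacian

/-!
On a function with the one-radius mean value property the maximum principle still holds, and the
maximum point farthest from the origin gives it for semicontinuous functions as well. Hence `u` can
be compared with the Perron solutions of the Dirichlet problem on `D`, which satisfy the mean value
property over *all* spheres: if `q₁ - q₂` is uniformly `ε`-close to `u` on the frontier, with `q₁`
and `q₂` subharmonic, then the difference of their Perron solutions is `ε`-close to `u` on all of
`D`. Every polynomial is such a difference `q₁ - q₂`, since adding a large multiple of `‖x‖ ^ 2`
makes it subharmonic, so by the Stone-Weierstrass theorem `u` is a uniform limit of functions with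
the full mean value property. It therefore has that property itself, and so it is harmonic. The
members of a Perron family are required to attain their boundary values, so no regularity of the
frontier is needed.

The Dirichlet problem on a ball is solved without the Poisson kernel: `p ↦ Δ ((R ^ 2 - ‖x‖ ^ 2) p)`
is an injective endomorphism of the polynomials of bounded degree, hence surjective, which gives
polynomial solutions for polynomial data, and uniform limits of these for continuous data.
-/

namespace Kellogg

section UnitSphereMeasure

variable {E : Type*} [NormedAddCommGroup E] [InnerProductSpace ℝ E]

lemma finrank_orthogonal_span_singleton_cast [FiniteDimensional ℝ E] {v : E} (hv : v ≠ 0) :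
    (Module.finrank ℝ (ℝ ∙ v)ᗮ : ℝ) = Module.finrank ℝ E - 1 := by
  have hsum := (ℝ ∙ v).finrank_add_finrank_orthogonal
  rw [finrank_span_singleton hv] at hsum
  rw [← hsum]
  push_cast
  ring

lemma sphere_inter_halfspace_subset_image_stereoInvFunAux {v : E} (hv : ‖v‖ = 1) :
    sphere (0 : E) 1 ∩ {x | inner ℝ v x ≤ 0} ⊆
      (fun w : (ℝ ∙ v)ᗮ => stereoInvFunAux v (w : E)) '' closedBall 0 2 := by
  rintro x ⟨hx, hvx : inner ℝ v x ≤ 0⟩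
  have hxv : x ≠ v := by
    rintro rfl
    rw [real_inner_self_eq_norm_sq, hv] at hvx
    norm_num at hvx
  refine ⟨stereoToFun v x, ?_, congrArg Subtype.val (stereo_left_inv hv (x := ⟨x, hx⟩) hxv)⟩
  have hproj : ‖(ℝ ∙ v)ᗮ.orthogonalProjectionOnto x‖ ≤ 1 :=
    ((ℝ ∙ v)ᗮ.norm_orthogonalProjectionOnto_apply_le x).trans_eq (mem_sphere_zero_iff_norm.1 hx)
  have hcoeff : ‖2 / (1 - inner ℝ v x)‖ ≤ 2 := by
    rw [Real.norm_of_nonneg (by apply div_nonneg <;> linarith), div_le_iff₀ (by linarith)]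
    linarith
  rw [mem_closedBall_zero_iff, stereoToFun_apply, norm_smul]
  simpa using mul_le_mul hcoeff hproj (norm_nonneg _) zero_le_two

lemma ball_subset_image_orthogonalProjectionOnto_sphere {v : E} (hv : ‖v‖ = 1) :
    ball 0 1 ⊆ (ℝ ∙ v)ᗮ.orthogonalProjectionOnto '' sphere (0 : E) 1 := by
  intro w hw
  have hwv : inner ℝ (w : E) v = 0 := by
    rw [real_inner_comm]
    exact Submodule.mem_orthogonal_singleton_iff_inner_right.1 w.2
  have hnonneg : 0 ≤ 1 - ‖w‖ ^ 2 := by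
    nlinarith [norm_nonneg w, mem_ball_zero_iff.1 hw]
  refine ⟨w + Real.sqrt (1 - ‖w‖ ^ 2) • v, ?_, by simp⟩
  rw [mem_sphere_zero_iff_norm, ← sq_eq_sq₀ (norm_nonneg _) zero_le_one, norm_add_sq_real,
    inner_smul_right, hwv, norm_smul, hv, mul_one, Real.norm_eq_abs, sq_abs, Real.sq_sqrt hnonneg]
  simp

variable (E) [MeasurableSpace E] [BorelSpace E]

/-- The normalized surface measure on the unit sphere of `E`, viewed as a measure on `E`. -/
noncomputable def unitSphereMeasure : Measure E :=
  ((μH[(Module.finrank ℝ E : ℝ) - 1]).restrict (sphere (0 : E) 1) Set.univ)⁻¹ •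
    (μH[(Module.finrank ℝ E : ℝ) - 1]).restrict (sphere (0 : E) 1)

lemma ae_unitSphereMeasure_norm_eq_one : ∀ᵐ y ∂unitSphereMeasure E, ‖y‖ = 1 := by
  refine Measure.smul_absolutelyContinuous.ae_le ?_
  filter_upwards [ae_restrict_mem isClosed_sphere.measurableSet] with y hy
  exact mem_sphere_zero_iff_norm.1 hy

variable {E}

lemma measurePreserving_unitSphereMeasure (e : E ≃ₗᵢ[ℝ] E) :
    MeasurePreserving e (unitSphereMeasure E) (unitSphereMeasure E) := by
  have hsphere : e ⁻¹' sphere (0 : E) 1 = sphere 0 1 := by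
    ext
    simp only [Set.mem_preimage, mem_sphere_zero_iff_norm, e.norm_map]
  have hrestrict := (e.toIsometryEquiv.measurePreserving_hausdorffMeasure
    ((Module.finrank ℝ E : ℝ) - 1)).restrict_preimage
      (isClosed_sphere (x := (0 : E)) (ε := 1)).measurableSet
  exact (hsphere ▸ hrestrict).smul_measure _

lemma integral_unitSphereMeasure_comp (e : E ≃ₗᵢ[ℝ] E) (f : E → ℝ) :
    ∫ y, f (e y) ∂unitSphereMeasure E = ∫ y, f y ∂unitSphereMeasure E :=
  (measurePreserving_unitSphereMeasure e).integral_comp e.toHomeomorph.measurableEmbedding f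

variable [FiniteDimensional ℝ E]

lemma hausdorffMeasure_sphere_inter_halfspace_lt_top {v : E} (hv : ‖v‖ = 1) :
    μH[(Module.finrank ℝ E : ℝ) - 1] (sphere (0 : E) 1 ∩ {x | inner ℝ v x ≤ 0}) < ⊤ := by
  rw [← finrank_orthogonal_span_singleton_cast (norm_ne_zero_iff.1 (hv ▸ one_ne_zero))]
  have hsmooth : ContDiff ℝ 1 fun w : (ℝ ∙ v)ᗮ => stereoInvFunAux v (w : E) :=
    contDiff_stereoInvFunAux.comp (ℝ ∙ v)ᗮ.subtypeL.contDiff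
  obtain ⟨K, hK⟩ := (hsmooth.locallyLipschitz.locallyLipschitzOn
    (s := closedBall 0 2)).exists_lipschitzOnWith_of_compact (isCompact_closedBall 0 2)
  calc μH[(Module.finrank ℝ (ℝ ∙ v)ᗮ : ℝ)] (sphere (0 : E) 1 ∩ {x | inner ℝ v x ≤ 0})
      ≤ _ := measure_mono (sphere_inter_halfspace_subset_image_stereoInvFunAux hv)
    _ ≤ _ := hK.hausdorffMeasure_image_le (Nat.cast_nonneg _)
    _ < ⊤ := ENNReal.mul_lt_top
        (ENNReal.rpow_lt_top_of_nonneg (Nat.cast_nonneg _) ENNReal.coe_ne_top)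
        (isCompact_closedBall _ _).measure_lt_top

variable (E) [Nontrivial E]

lemma hausdorffMeasure_sphere_lt_top :
    μH[(Module.finrank ℝ E : ℝ) - 1] (sphere (0 : E) 1) < ⊤ := by
  obtain ⟨v, hv⟩ := exists_norm_eq E zero_le_one
  refine (measure_mono fun x hx => ?_).trans_lt (measure_union_lt_top
    (hausdorffMeasure_sphere_inter_halfspace_lt_top hv)
    (hausdorffMeasure_sphere_inter_halfspace_lt_top (v := -v) (by rwa [norm_neg])))
  rcases le_total (inner ℝ v x) 0 with h | h
  · exact Or.inl ⟨hx, h⟩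
  · exact Or.inr ⟨hx, by simpa using h⟩

lemma hausdorffMeasure_sphere_pos :
    0 < μH[(Module.finrank ℝ E : ℝ) - 1] (sphere (0 : E) 1) := by
  obtain ⟨v, hv⟩ := exists_norm_eq E zero_le_one
  rw [← finrank_orthogonal_span_singleton_cast (norm_ne_zero_iff.1 (hv ▸ one_ne_zero))]
  calc 0 < μH[(Module.finrank ℝ (ℝ ∙ v)ᗮ : ℝ)] (ball (0 : (ℝ ∙ v)ᗮ) 1) :=
        isOpen_ball.measure_pos _ ⟨0, mem_ball_self one_pos⟩
    _ ≤ _ := measure_mono (ball_subset_image_orthogonalProjectionOnto_sphere hv)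
    _ ≤ _ := hausdorffMeasure_orthogonalProjectionOnto_le _ _ _ (Nat.cast_nonneg _)

instance : IsProbabilityMeasure (unitSphereMeasure E) := by
  constructor
  simp only [unitSphereMeasure, Measure.smul_apply, Measure.restrict_apply_univ, smul_eq_mul]
  exact ENNReal.inv_mul_cancel (hausdorffMeasure_sphere_pos E).ne'
    (hausdorffMeasure_sphere_lt_top E).ne

variable {E}

lemma integrable_unitSphereMeasure {f : E → ℝ} (hf : ContinuousOn f (sphere 0 1)) :
    Integrable f (unitSphereMeasure E) := by
  rw [← Measure.restrict_eq_self_of_ae_mem (s := sphere (0 : E) 1)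
    ((ae_unitSphereMeasure_norm_eq_one E).mono fun y => mem_sphere_zero_iff_norm.2)]
  exact hf.integrableOn_compact (isCompact_sphere 0 1)

end UnitSphereMeasure

section SphereUniform

variable {E : Type*} [NormedAddCommGroup E] [InnerProductSpace ℝ E] [MeasurableSpace E]
  [BorelSpace E]

/-- The uniform probability measure on the sphere `sphere x r`, so that
`∫ z, u z ∂sphereUniform x r` is the spherical mean `M(x, r, u)`. For `r = 0` it is the point mass
at `x`. -/
noncomputable def sphereUniform (x : E) (r : ℝ) : Measure E :=
  (unitSphereMeasure E).map fun y => x + r • y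

lemma ae_sphereUniform_mem_sphere (x : E) {r : ℝ} (hr : 0 ≤ r) :
    ∀ᵐ z ∂sphereUniform x r, z ∈ sphere x r := by
  refine (ae_map_iff (by fun_prop) isClosed_sphere.measurableSet).2 ?_
  filter_upwards [ae_unitSphereMeasure_norm_eq_one E] with y hy
  rw [dist_eq_norm, add_sub_cancel_left, norm_smul, hy, mul_one, Real.norm_of_nonneg hr]

variable [FiniteDimensional ℝ E] [Nontrivial E]

instance (x : E) (r : ℝ) : IsProbabilityMeasure (sphereUniform x r) :=
  Measure.isProbabilityMeasure_map (by fun_prop)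

lemma integral_sphereUniform (f : E → ℝ) (x : E) (r : ℝ) :
    ∫ z, f z ∂sphereUniform x r = ∫ y, f (x + r • y) ∂unitSphereMeasure E := by
  rcases eq_or_ne r 0 with rfl | hr
  · simp [sphereUniform]
  · exact ((Homeomorph.smulOfNeZero r hr).trans
      (Homeomorph.addLeft x)).measurableEmbedding.integral_map f

lemma integrable_sphereUniform {f : E → ℝ} {x : E} {r : ℝ} (hr : 0 ≤ r)
    (hf : ContinuousOn f (sphere x r)) : Integrable f (sphereUniform x r) := by
  rw [← Measure.restrict_eq_self_of_ae_mem (ae_sphereUniform_mem_sphere x hr)]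
  exact hf.integrableOn_compact (isCompact_sphere x r)

lemma integral_inner_sub_sphereUniform (v x : E) (r : ℝ) :
    ∫ z, inner ℝ v (z - x) ∂sphereUniform x r = 0 := by
  have hodd := integral_unitSphereMeasure_comp (LinearIsometryEquiv.neg ℝ)
    fun y : E => inner ℝ v (x + r • y - x)
  simp only [LinearIsometryEquiv.coe_neg, smul_neg, add_sub_cancel_left, inner_neg_right,
    integral_neg] at hodd
  simp only [integral_sphereUniform, add_sub_cancel_left]
  linarith

lemma integral_norm_sq_sphereUniform (x : E) {r : ℝ} (hr : 0 ≤ r) :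
    ∫ z, ‖z‖ ^ 2 ∂sphereUniform x r = ‖x‖ ^ 2 + r ^ 2 := by
  have hexpand : ∀ᵐ z ∂sphereUniform x r,
      ‖z‖ ^ 2 = (‖x‖ ^ 2 + r ^ 2) + 2 * inner ℝ x (z - x) := by
    filter_upwards [ae_sphereUniform_mem_sphere x hr] with z hz
    have := norm_add_sq_real x (z - x)
    rw [add_sub_cancel, mem_sphere_iff_norm.1 hz] at this
    linarith
  rw [integral_congr_ae hexpand, integral_add (integrable_const _)
    (integrable_sphereUniform hr (by fun_prop)), integral_const_mul,
    integral_inner_sub_sphereUniform]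
  simp

lemma not_ae_sphereUniform_norm_le (x : E) {r : ℝ} (hr : 0 < r) :
    ¬ ∀ᵐ z ∂sphereUniform x r, ‖z‖ ≤ ‖x‖ := by
  intro hle
  have hmean : ∫ z, ‖z‖ ^ 2 ∂sphereUniform x r ≤ ∫ _, ‖x‖ ^ 2 ∂sphereUniform x r :=
    integral_mono_ae (integrable_sphereUniform hr.le (by fun_prop)) (integrable_const _)
      (hle.mono fun z hz => pow_le_pow_left₀ (norm_nonneg z) hz 2)
  rw [integral_norm_sq_sphereUniform x hr.le, integral_const, probReal_univ, one_smul] at hmean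
  nlinarith [sq_pos_of_pos hr]

end SphereUniform

lemma sphereMean_eq_integral_sphereUniform (m : ℕ) [NeZero m] (u : EuclideanSpace ℝ (Fin m) → ℝ)
    (x : EuclideanSpace ℝ (Fin m)) (r : ℝ) :
    sphereMean m u x r = ∫ z, u z ∂sphereUniform x r := by
  rw [integral_sphereUniform, unitSphereMeasure, finrank_euclideanSpace_fin]
  rfl

section RotationGenerator

variable {E : Type*} [NormedAddCommGroup E] [InnerProductSpace ℝ E]

/-- The generator `y ↦ ⟪v, y⟫ w - ⟪w, y⟫ v` of the rotations in the plane spanned by the orthonormal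
vectors `v` and `w`. It vanishes for `v = w`, so that sums over planes may run over all pairs of
vectors of an orthonormal basis. -/
noncomputable def rotationGenerator (v w : E) : E →L[ℝ] E :=
  InnerProductSpace.rankOne ℝ w v - InnerProductSpace.rankOne ℝ v w

lemma rotationGenerator_apply (v w y : E) :
    rotationGenerator v w y = inner ℝ v y • w - inner ℝ w y • v := by
  simp [rotationGenerator]

lemma rotationGenerator_mem_skewAdjoint [CompleteSpace E] (v w : E) :
    rotationGenerator v w ∈ skewAdjoint (E →L[ℝ] E) := by
  simp [skewAdjoint.mem_iff, rotationGenerator, ContinuousLinearMap.star_eq_adjoint]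

variable {ι : Type*} [Fintype ι] (b : OrthonormalBasis ι ℝ E)

lemma sum_rotationGenerator_rotationGenerator (y : E) :
    ∑ i, ∑ j, rotationGenerator (b i) (b j) (rotationGenerator (b i) (b j) y)
      = -(2 * ((Fintype.card ι : ℝ) - 1)) • y := by
  classical
  have hterm : ∀ i j, rotationGenerator (b i) (b j) (rotationGenerator (b i) (b j) y)
      = (if i = j then (2 * inner ℝ (b i) y) • b j else 0)
        - (inner ℝ (b i) y • b i + inner ℝ (b j) y • b j) := by
    intro i j
    rcases eq_or_ne i j with rfl | hij
    · simp [rotationGenerator, two_mul, add_smul]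
    · simp [rotationGenerator_apply, inner_sub_right, inner_smul_right, b.inner_eq_ite, hij,
        hij.symm]
      abel
  simp only [hterm, Finset.sum_sub_distrib, Finset.sum_add_distrib, Finset.sum_ite_eq,
    Finset.mem_univ, if_true, Finset.sum_const, Finset.card_univ, mul_smul,
    ← Finset.smul_sum, b.sum_repr' y, ← Nat.cast_smul_eq_nsmul ℝ]
  module

lemma sum_apply_rotationGenerator_rotationGenerator (B : E →L[ℝ] E →L[ℝ] ℝ) {y : E}
    (hy : ‖y‖ = 1) :
    ∑ i, ∑ j, B (rotationGenerator (b i) (b j) y) (rotationGenerator (b i) (b j) y)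
      = 2 * (∑ i, B (b i) (b i) - B y y) := by
  have hnorm : ∑ i, inner ℝ (b i) y ^ 2 = 1 := by
    simpa [hy, Real.norm_eq_abs] using b.sum_sq_norm_inner_right y
  have hByy : ∑ i, ∑ j, inner ℝ (b i) y * inner ℝ (b j) y * B (b i) (b j) = B y y := by
    conv_rhs => rw [← b.sum_repr' y]
    simp only [map_sum, map_smul, sum_apply, smul_apply, smul_eq_mul, Finset.mul_sum]
    rw [Finset.sum_comm]
    exact Finset.sum_congr rfl fun i _ => Finset.sum_congr rfl fun j _ => by ring
  have hterm : ∀ i j, B (rotationGenerator (b i) (b j) y) (rotationGenerator (b i) (b j) y)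
      = inner ℝ (b i) y ^ 2 * B (b j) (b j) + inner ℝ (b j) y ^ 2 * B (b i) (b i)
        - inner ℝ (b i) y * inner ℝ (b j) y * B (b i) (b j)
        - inner ℝ (b j) y * inner ℝ (b i) y * B (b j) (b i) := by
    intro i j
    simp only [rotationGenerator_apply, map_sub, map_smul, sub_apply, smul_apply, smul_eq_mul]
    ring
  simp only [hterm, Finset.sum_sub_distrib, Finset.sum_add_distrib]
  rw [Finset.sum_comm (f := fun i j => inner ℝ (b j) y * inner ℝ (b i) y * B (b j) (b i)), hByy]
  simp only [← Finset.mul_sum, ← Finset.sum_mul, hnorm]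
  ring

end RotationGenerator

section MeanValueInequality

variable {E : Type*} [NormedAddCommGroup E] [InnerProductSpace ℝ E]

lemma continuous_fderiv_fderiv {f : E → ℝ} (hf : ContDiff ℝ 2 f) :
    Continuous (fderiv ℝ (fderiv ℝ f)) :=
  (hf.fderiv_right (m := 1) (by norm_num)).continuous_fderiv one_ne_zero

/-- The outward flux of `∇f` through `sphere x r`, divided by the area of the unit sphere. -/
noncomputable def radialFlux [MeasurableSpace E] [BorelSpace E] (f : E → ℝ) (x : E)
    (r : ℝ) : ℝ :=
  r ^ (Module.finrank ℝ E - 1) * ∫ y, fderiv ℝ f (x + r • y) y ∂unitSphereMeasure E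

lemma radialFlux_zero [MeasurableSpace E] [BorelSpace E] (f : E → ℝ) (x : E) :
    radialFlux f x 0 = 0 := by
  have hodd := integral_unitSphereMeasure_comp (LinearIsometryEquiv.neg ℝ)
    fun y : E => fderiv ℝ f x y
  simp only [LinearIsometryEquiv.coe_neg, map_neg, integral_neg] at hodd
  simp only [radialFlux, zero_smul, add_zero]
  rw [show ∫ y, fderiv ℝ f x y ∂unitSphereMeasure E = 0 by linarith, mul_zero]

variable [FiniteDimensional ℝ E]

lemma laplacian_eq_sum_fderiv_fderiv {ι : Type*} [Fintype ι] (b : OrthonormalBasis ι ℝ E)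
    (f : E → ℝ) (x : E) : Δ f x = ∑ i, fderiv ℝ (fderiv ℝ f) x (b i) (b i) := by
  simp [InnerProductSpace.laplacian_eq_iteratedFDeriv_orthonormalBasis f b,
    iteratedFDeriv_two_apply]

lemma continuous_laplacian {f : E → ℝ} (hf : ContDiff ℝ 2 f) : Continuous (Δ f) := by
  have := continuous_fderiv_fderiv hf
  rw [funext (laplacian_eq_sum_fderiv_fderiv (stdOrthonormalBasis ℝ E) f)]
  fun_prop

variable [MeasurableSpace E] [BorelSpace E]

lemma integral_unitSphereMeasure_exp_skewAdjoint {A : E →L[ℝ] E}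
    (hA : A ∈ skewAdjoint (E →L[ℝ] E)) (f : E → ℝ) (t : ℝ) :
    ∫ y, f (NormedSpace.exp (t • A) y) ∂unitSphereMeasure E = ∫ y, f y ∂unitSphereMeasure E := by
  let := NormedAlgebra.restrictScalars ℚ ℝ (E →L[ℝ] E)
  have hunitary : NormedSpace.exp (t • A) ∈ unitary (E →L[ℝ] E) :=
    NormedSpace.exp_mem_unitary_of_mem_skewAdjoint (skewAdjoint.smul_mem t hA)
  exact integral_unitSphereMeasure_comp (Unitary.linearIsometryEquiv ⟨_, hunitary⟩) f

variable [Nontrivial E]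

lemma hasDerivAt_integral_unitSphereMeasure {G G' : ℝ → E → ℝ} (hG : ∀ t, Continuous (G t))
    (hG' : Continuous (Function.uncurry G')) (hderiv : ∀ t y, HasDerivAt (G · y) (G' t y) t)
    (t : ℝ) :
    HasDerivAt (fun s => ∫ y, G s y ∂unitSphereMeasure E) (∫ y, G' t y ∂unitSphereMeasure E) t := by
  obtain ⟨C, hC⟩ := ((isCompact_closedBall t 1).prod
    (isCompact_sphere (0 : E) 1)).exists_bound_of_continuousOn hG'.continuousOn
  refine (hasDerivAt_integral_of_dominated_loc_of_deriv_le (bound := fun _ => C)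
    (ball_mem_nhds t one_pos) (.of_forall fun s => (hG s).aestronglyMeasurable)
    (integrable_unitSphereMeasure (hG t).continuousOn)
    (by fun_prop : Continuous (G' t)).aestronglyMeasurable ?_ (integrable_const C)
    (.of_forall fun y s _ => hderiv s y)).2
  filter_upwards [ae_unitSphereMeasure_norm_eq_one E] with y hy s hs
  exact hC (s, y) ⟨ball_subset_closedBall hs, mem_sphere_zero_iff_norm.2 hy⟩

lemma integral_fderiv_skewAdjoint_eq_zero {A : E →L[ℝ] E} (hA : A ∈ skewAdjoint (E →L[ℝ] E))
    {f : E → ℝ} (hf : ContDiff ℝ 1 f) :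
    ∫ y, fderiv ℝ f y (A y) ∂unitSphereMeasure E = 0 := by
  have hexp : Continuous fun t : ℝ => NormedSpace.exp (t • A) :=
    continuous_iff_continuousAt.2 fun t => (hasDerivAt_exp_smul_const A t).continuousAt
  have hflow : Continuous fun p : ℝ × E => NormedSpace.exp (p.1 • A) p.2 :=
    (hexp.comp continuous_fst).clm_apply continuous_snd
  have hderiv := hasDerivAt_integral_unitSphereMeasure
    (G := fun t y => f (NormedSpace.exp (t • A) y))
    (G' := fun t y => fderiv ℝ f (NormedSpace.exp (t • A) y) ((NormedSpace.exp (t • A) * A) y))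
    (fun t => hf.continuous.comp (NormedSpace.exp (t • A)).continuous)
    (((hf.continuous_fderiv one_ne_zero).comp hflow).clm_apply
      (((hexp.comp continuous_fst).mul continuous_const).clm_apply continuous_snd))
    (fun t y => (hf.differentiable one_ne_zero _).hasFDerivAt.comp_hasDerivAt t
      ((hasDerivAt_exp_smul_const A t).clm_apply (hasDerivAt_const t y) |>.congr_deriv (by simp)))
    0
  simp only [integral_unitSphereMeasure_exp_skewAdjoint hA] at hderiv
  simpa using hderiv.unique (hasDerivAt_const _ _)

lemma integral_fderiv_fderiv_skewAdjoint {A : E →L[ℝ] E} (hA : A ∈ skewAdjoint (E →L[ℝ] E))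
    {f : E → ℝ} (hf : ContDiff ℝ 2 f) (x : E) (r : ℝ) :
    ∫ y, (r * fderiv ℝ (fderiv ℝ f) (x + r • y) (A y) (A y) + fderiv ℝ f (x + r • y) (A (A y)))
      ∂unitSphereMeasure E = 0 := by
  have hf' : ContDiff ℝ 1 (fderiv ℝ f) := hf.fderiv_right (by norm_num)
  have hdiff : ∀ y, HasFDerivAt (fun y => fderiv ℝ f (x + r • y) (A y))
      (r • (fderiv ℝ (fderiv ℝ f) (x + r • y)).flip (A y) + fderiv ℝ f (x + r • y) ∘L A) y := by
    intro y
    have haffine : HasFDerivAt (fun y : E => x + r • y) (r • ContinuousLinearMap.id ℝ E) y :=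
      ((hasFDerivAt_id y).const_smul r).const_add x
    refine (((hf'.differentiable one_ne_zero _).hasFDerivAt.comp y haffine).clm_apply
      A.hasFDerivAt).congr_fderiv ?_
    ext v
    simp [add_comm]
  have hzero := integral_fderiv_skewAdjoint_eq_zero hA
    (f := fun y => fderiv ℝ f (x + r • y) (A y)) (by fun_prop)
  simpa [fun y => (hdiff y).fderiv] using hzero

-- Obtained from the rotation identity above by summing over all coordinate planes.
lemma mul_integral_laplacian_sub_radial {f : E → ℝ} (hf : ContDiff ℝ 2 f) (x : E) (r : ℝ) :
    r * ∫ y, (Δ f (x + r • y) - fderiv ℝ (fderiv ℝ f) (x + r • y) y y) ∂unitSphereMeasure E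
      = (Module.finrank ℝ E - 1) * ∫ y, fderiv ℝ f (x + r • y) y ∂unitSphereMeasure E := by
  let b := stdOrthonormalBasis ℝ E
  have hf' : Continuous (fderiv ℝ f) := hf.continuous_fderiv two_ne_zero
  have := continuous_fderiv_fderiv hf
  have hΔ := continuous_laplacian hf
  have hsum : ∫ y, ∑ i, ∑ j, (r * fderiv ℝ (fderiv ℝ f) (x + r • y)
      (rotationGenerator (b i) (b j) y) (rotationGenerator (b i) (b j) y)
      + fderiv ℝ f (x + r • y) (rotationGenerator (b i) (b j) (rotationGenerator (b i) (b j) y)))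
      ∂unitSphereMeasure E = 0 := by
    rw [integral_finsetSum _ fun i _ => integrable_unitSphereMeasure (by fun_prop)]
    refine Finset.sum_eq_zero fun i _ => ?_
    rw [integral_finsetSum _ fun j _ => integrable_unitSphereMeasure (by fun_prop)]
    exact Finset.sum_eq_zero fun j _ => integral_fderiv_fderiv_skewAdjoint
      (rotationGenerator_mem_skewAdjoint _ _) hf x r
  have hpointwise : ∀ᵐ y ∂unitSphereMeasure E, ∑ i, ∑ j, (r * fderiv ℝ (fderiv ℝ f) (x + r • y)
      (rotationGenerator (b i) (b j) y) (rotationGenerator (b i) (b j) y)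
      + fderiv ℝ f (x + r • y) (rotationGenerator (b i) (b j) (rotationGenerator (b i) (b j) y)))
      = 2 * (r * (Δ f (x + r • y) - fderiv ℝ (fderiv ℝ f) (x + r • y) y y)
        - (Module.finrank ℝ E - 1) * fderiv ℝ f (x + r • y) y) := by
    filter_upwards [ae_unitSphereMeasure_norm_eq_one E] with y hy
    simp only [Finset.sum_add_distrib, ← Finset.mul_sum, ← map_sum,
      sum_apply_rotationGenerator_rotationGenerator b _ hy,
      sum_rotationGenerator_rotationGenerator, laplacian_eq_sum_fderiv_fderiv b, map_smul,
      smul_eq_mul, Fintype.card_fin]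
    ring
  rw [integral_congr_ae hpointwise, integral_const_mul, integral_sub, integral_const_mul,
    integral_const_mul] at hsum
  · linarith
  all_goals exact integrable_unitSphereMeasure (by fun_prop)

lemma hasDerivAt_integral_sphereUniform {f : E → ℝ} (hf : ContDiff ℝ 2 f) (x : E) (r : ℝ) :
    HasDerivAt (fun r => ∫ z, f z ∂sphereUniform x r)
      (∫ y, fderiv ℝ f (x + r • y) y ∂unitSphereMeasure E) r := by
  have hf' : Continuous (fderiv ℝ f) := hf.continuous_fderiv two_ne_zero
  simp only [integral_sphereUniform]
  refine hasDerivAt_integral_unitSphereMeasure (G := fun r y => f (x + r • y))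
    (G' := fun r y => fderiv ℝ f (x + r • y) y) (fun _ => by fun_prop)
    (by simp only [Function.uncurry_def]; fun_prop) (fun r y => ?_) r
  refine (hf.differentiable two_ne_zero _).hasFDerivAt.comp_hasDerivAt r ?_
  simpa using ((hasDerivAt_id r).smul_const y).const_add x

lemma hasDerivAt_integral_fderiv_radial {f : E → ℝ} (hf : ContDiff ℝ 2 f) (x : E) (r : ℝ) :
    HasDerivAt (fun r : ℝ => ∫ y, fderiv ℝ f (x + r • y) y ∂unitSphereMeasure E)
      (∫ y, fderiv ℝ (fderiv ℝ f) (x + r • y) y y ∂unitSphereMeasure E) r := by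
  have hf' : ContDiff ℝ 1 (fderiv ℝ f) := hf.fderiv_right (by norm_num)
  have := continuous_fderiv_fderiv hf
  refine hasDerivAt_integral_unitSphereMeasure (G := fun r y => fderiv ℝ f (x + r • y) y)
    (G' := fun r y => fderiv ℝ (fderiv ℝ f) (x + r • y) y y) (fun _ => by fun_prop)
    (by simp only [Function.uncurry_def]; fun_prop) (fun r y => ?_) r
  have hline : HasDerivAt (fun r : ℝ => x + r • y) y r := by
    simpa using ((hasDerivAt_id r).smul_const y).const_add x
  simpa using ((hf'.differentiable one_ne_zero _).hasFDerivAt.comp_hasDerivAt r hline).clm_apply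
    (hasDerivAt_const r y)

lemma continuous_radialFlux {f : E → ℝ} (hf : ContDiff ℝ 2 f) (x : E) :
    Continuous (radialFlux f x) :=
  (continuous_pow _).mul <| continuous_iff_continuousAt.2 fun r =>
    (hasDerivAt_integral_fderiv_radial hf x r).continuousAt

lemma hasDerivAt_radialFlux {f : E → ℝ} (hf : ContDiff ℝ 2 f) (x : E) {r : ℝ} (hr : r ≠ 0) :
    HasDerivAt (radialFlux f x)
      (r ^ (Module.finrank ℝ E - 1) * ∫ z, Δ f z ∂sphereUniform x r) r := by
  have := continuous_fderiv_fderiv hf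
  have hΔf := continuous_laplacian hf
  have hspherical := mul_integral_laplacian_sub_radial hf x r
  rw [integral_sub (integrable_unitSphereMeasure (by fun_prop))
    (integrable_unitSphereMeasure (by fun_prop)), ← integral_sphereUniform,
    ← Nat.cast_pred Module.finrank_pos] at hspherical
  refine ((hasDerivAt_pow _ r).mul (hasDerivAt_integral_fderiv_radial hf x r)).congr_deriv ?_
  generalize Module.finrank ℝ E - 1 = n at hspherical ⊢
  apply mul_left_cancel₀ hr
  have hpow : r * (n * r ^ (n - 1)) = n * r ^ n := by
    rcases n with _ | k
    · simp
    · rw [Nat.add_sub_cancel, pow_succ]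
      ring
  linear_combination (∫ y, fderiv ℝ f (x + r • y) y ∂unitSphereMeasure E) * hpow
    - r ^ n * hspherical

lemma radialFlux_nonneg {f : E → ℝ} (hf : ContDiff ℝ 2 f) {x : E} {r : ℝ} (hr : 0 ≤ r)
    (hΔ : ∀ s ∈ Set.Ioo 0 r, 0 ≤ ∫ z, Δ f z ∂sphereUniform x s) : 0 ≤ radialFlux f x r := by
  have hmono : MonotoneOn (radialFlux f x) (Set.Icc 0 r) := by
    refine monotoneOn_of_deriv_nonneg (convex_Icc 0 r) (continuous_radialFlux hf x).continuousOn
      ?_ ?_ <;> rw [interior_Icc]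
    · exact fun s hs =>
        (hasDerivAt_radialFlux hf x hs.1.ne').differentiableAt.differentiableWithinAt
    · intro s hs
      rw [(hasDerivAt_radialFlux hf x hs.1.ne').deriv]
      exact mul_nonneg (pow_nonneg hs.1.le _) (hΔ s hs)
  exact (radialFlux_zero f x).symm.trans_le
    (hmono (Set.left_mem_Icc.2 hr) (Set.right_mem_Icc.2 hr) hr)

lemma le_integral_sphereUniform {f : E → ℝ} (hf : ContDiff ℝ 2 f) {x : E} {r : ℝ} (hr : 0 ≤ r)
    (hΔ : ∀ s ∈ Set.Ioo 0 r, 0 ≤ ∫ z, Δ f z ∂sphereUniform x s) :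
    f x ≤ ∫ z, f z ∂sphereUniform x r := by
  have hmono : MonotoneOn (fun s => ∫ z, f z ∂sphereUniform x s) (Set.Icc 0 r) := by
    have hderiv := hasDerivAt_integral_sphereUniform hf x
    refine monotoneOn_of_deriv_nonneg (convex_Icc 0 r)
      (fun s _ => (hderiv s).continuousAt.continuousWithinAt)
      (fun s _ => (hderiv s).differentiableAt.differentiableWithinAt) ?_
    rw [interior_Icc]
    intro s hs
    rw [(hderiv s).deriv]
    exact nonneg_of_mul_nonneg_right (radialFlux_nonneg hf hs.1.le fun t ht =>
      hΔ t ⟨ht.1, ht.2.trans hs.2⟩) (pow_pos hs.1 _)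
  simpa [integral_sphereUniform] using
    hmono (Set.left_mem_Icc.2 hr) (Set.right_mem_Icc.2 hr) hr

lemma integral_sphereUniform_eq {f : E → ℝ} (hf : ContDiff ℝ 2 f) {x : E} {r : ℝ} (hr : 0 ≤ r)
    (hΔ : ∀ s ∈ Set.Ioo 0 r, ∫ z, Δ f z ∂sphereUniform x s = 0) :
    ∫ z, f z ∂sphereUniform x r = f x := by
  refine le_antisymm ?_ (le_integral_sphereUniform hf hr fun s hs => (hΔ s hs).ge)
  have hneg := le_integral_sphereUniform (f := -f) (x := x) hf.neg hr fun s hs => by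
    rw [InnerProductSpace.laplacian_neg]
    simp [integral_neg, hΔ s hs]
  simpa [integral_neg] using hneg

lemma le_integral_sphereUniform_of_laplacian_nonneg {f : E → ℝ} (hf : ContDiff ℝ 2 f) {x : E}
    {r : ℝ} (hr : 0 ≤ r) (hΔ : ∀ z ∈ ball x r, 0 ≤ Δ f z) :
    f x ≤ ∫ z, f z ∂sphereUniform x r := by
  refine le_integral_sphereUniform hf hr fun s hs => integral_nonneg_of_ae ?_
  filter_upwards [ae_sphereUniform_mem_sphere x hs.1.le] with z hz
  exact hΔ z (sphere_subset_ball hs.2 hz)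

end MeanValueInequality

section MaximumPrinciple

variable {E : Type*} [NormedAddCommGroup E] [InnerProductSpace ℝ E] [FiniteDimensional ℝ E]
  [MeasurableSpace E] [BorelSpace E] [Nontrivial E]

lemma ae_sphereUniform_eq_of_le_integral {w : E → ℝ} {x : E} {r M : ℝ}
    (hint : Integrable w (sphereUniform x r)) (hle : ∀ᵐ z ∂sphereUniform x r, w z ≤ M)
    (hM : M ≤ ∫ z, w z ∂sphereUniform x r) : ∀ᵐ z ∂sphereUniform x r, w z = M := by
  refine (integral_eq_iff_of_ae_le hint (integrable_const M) hle).1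
    (le_antisymm (integral_mono_ae hint (integrable_const M) hle) ?_)
  rwa [integral_const, probReal_univ, one_smul]

-- The maximum is contradicted at a maximum point farthest from the origin: a sphere around it
-- contains points that are still farther away.
lemma le_of_le_on_frontier {Ω : Set E} (hΩ : Bornology.IsBounded Ω) {w : E → ℝ} {c : ℝ}
    (hw : UpperSemicontinuousOn w (closure Ω))
    (hsub : ∀ x ∈ Ω, ∃ r > 0, closedBall x r ⊆ Ω ∧ Integrable w (sphereUniform x r) ∧
      w x ≤ ∫ z, w z ∂sphereUniform x r)
    (hc : ∀ x ∈ frontier Ω, w x ≤ c) {x : E} (hx : x ∈ closure Ω) : w x ≤ c := by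
  have hcompact : IsCompact (closure Ω) := hΩ.isCompact_closure
  obtain ⟨a, ha, hmax⟩ := hw.exists_isMaxOn ⟨x, hx⟩ hcompact
  refine (hmax hx).trans ?_
  by_contra! hca
  obtain ⟨b, ⟨hb, hab⟩, hfar⟩ := (hw.isCompact_inter_preimage_Ici hcompact (w a)).exists_isMaxOn
    ⟨a, ha, le_refl (w a)⟩ continuous_norm.continuousOn
  have hbΩ : b ∈ Ω := by
    by_contra hbΩ
    exact (hca.trans_le hab).not_ge (hc b ⟨hb, fun h => hbΩ (interior_subset h)⟩)
  obtain ⟨r, hr, hball, hint, hmean⟩ := hsub b hbΩ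
  have hsphere : ∀ᵐ z ∂sphereUniform b r, z ∈ closure Ω := by
    filter_upwards [ae_sphereUniform_mem_sphere b hr.le] with z hz
    exact subset_closure (hball (sphere_subset_closedBall hz))
  refine not_ae_sphereUniform_norm_le b hr ?_
  filter_upwards [hsphere, ae_sphereUniform_eq_of_le_integral hint
    (hsphere.mono fun z hz => hmax hz) (hab.trans hmean)] with z hz hwz
  exact hfar ⟨hz, hwz.ge⟩

end MaximumPrinciple

section Polynomials

open MvPolynomial

lemma laplacian_eq_sum_fderiv_fderiv_apply {E ι : Type*} [NormedAddCommGroup E]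
    [InnerProductSpace ℝ E] [FiniteDimensional ℝ E] [Fintype ι] (b : OrthonormalBasis ι ℝ E)
    {f : E → ℝ} {x : E} (hf : DifferentiableAt ℝ (fderiv ℝ f) x) :
    Δ f x = ∑ i, fderiv ℝ (fun y => fderiv ℝ f y (b i)) x (b i) := by
  rw [laplacian_eq_sum_fderiv_fderiv b]
  refine Finset.sum_congr rfl fun i _ => ?_
  rw [fderiv_clm_apply hf (differentiableAt_const _)]
  simp

variable {ι : Type*}

lemma totalDegree_pderiv_le {R : Type*} [CommSemiring R] (i : ι) (p : MvPolynomial ι R) :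
    (pderiv i p).totalDegree ≤ p.totalDegree - 1 := by
  refine Finset.sup_le fun s hs => ?_
  rw [mem_support_iff, coeff_pderiv] at hs
  have hdegree := le_totalDegree (mem_support_iff.2 (left_ne_zero_of_mul hs))
  rw [Finsupp.sum_add_index' (fun _ => rfl) (fun _ _ _ => rfl),
    Finsupp.sum_single_index rfl] at hdegree
  exact Nat.le_sub_one_of_lt hdegree

lemma pderiv_comm {R : Type*} [CommSemiring R] (i j : ι) (p : MvPolynomial ι R) :
    pderiv i (pderiv j p) = pderiv j (pderiv i p) := by
  classical
  induction p using MvPolynomial.induction_on with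
  | C a => simp
  | add p q hp hq => simp [hp, hq]
  | mul_X p n hp =>
    simp only [Derivation.leibniz, smul_eq_mul, map_add, hp, pderiv_X, Pi.single_apply]
    split_ifs <;> simp <;> ring

/-- The polynomial function on Euclidean space defined by `p`. -/
noncomputable def polyFun : MvPolynomial ι ℝ →ₐ[ℝ] (EuclideanSpace ℝ ι → ℝ) :=
  aeval fun i x => x i

lemma polyFun_apply (p : MvPolynomial ι ℝ) (x : EuclideanSpace ℝ ι) :
    polyFun p x = eval x.ofLp p := by
  induction p using MvPolynomial.induction_on with
  | C a => simp [polyFun]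
  | add p q hp hq => simp [hp, hq]
  | mul_X p n hp =>
    rw [map_mul, Pi.mul_apply, hp, map_mul, eval_X]
    simp [polyFun]

@[simp] lemma polyFun_C (a : ℝ) : polyFun (C a : MvPolynomial ι ℝ) = fun _ => a := by
  ext x
  simp [polyFun_apply]

@[simp] lemma polyFun_X (i : ι) : polyFun (X i) = fun x => x i := by
  ext x
  simp [polyFun_apply]

lemma eq_zero_of_polyFun_eq_zero [Finite ι] {p : MvPolynomial ι ℝ} {U : Set (EuclideanSpace ℝ ι)}
    (hU : IsOpen U) (hne : U.Nonempty) (hp : ∀ x ∈ U, polyFun p x = 0) : p = 0 := by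
  have := Fintype.ofFinite ι
  obtain ⟨c, hc⟩ := hne
  obtain ⟨ε, hε, hball⟩ := Metric.isOpen_iff.1
    (hU.preimage (PiLp.continuous_toLp 2 fun _ : ι => ℝ)) c.ofLp hc
  refine funext_set (fun i => ball (c i) ε) (fun i => ?_) fun v hv => ?_
  · rw [Real.ball_eq_Ioo]
    exact Set.Ioo_infinite (by linarith)
  · rw [← ball_pi _ hε] at hv
    simpa [polyFun_apply] using hp _ (hball hv)

lemma exists_polyFun_near [Finite ι] {K : Set (EuclideanSpace ℝ ι)} (hK : IsCompact K)
    {f : EuclideanSpace ℝ ι → ℝ} (hf : ContinuousOn f K) {ε : ℝ} (hε : 0 < ε) :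
    ∃ p : MvPolynomial ι ℝ, ∀ x ∈ K, |polyFun p x - f x| < ε := by
  have := isCompact_iff_compactSpace.1 hK
  let coord : ι → C(K, ℝ) := fun i => ⟨fun x => (x : EuclideanSpace ℝ ι) i, by fun_prop⟩
  have hcoord : ∀ p (x : K), aeval coord p x = polyFun p x := fun p x => by
    rw [polyFun_apply, ← aeval_eq_eval]
    exact DFunLike.congr_fun (comp_aeval coord (ContinuousMap.evalAlgHom ℝ ℝ x)) p
  have hsep : (aeval coord : MvPolynomial ι ℝ →ₐ[ℝ] C(K, ℝ)).range.SeparatesPoints := by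
    intro x y hxy
    obtain ⟨i, hi⟩ : ∃ i, (x : EuclideanSpace ℝ ι) i ≠ (y : EuclideanSpace ℝ ι) i := by
      by_contra! h
      exact hxy (Subtype.ext (PiLp.ext h))
    exact ⟨coord i, ⟨coord i, ⟨X i, aeval_X coord i⟩, rfl⟩, hi⟩
  obtain ⟨⟨_, p, rfl⟩, hp⟩ :=
    ContinuousMap.exists_mem_subalgebra_near_continuous_of_separatesPoints _ hsep
      (fun x : K => f x) hf.domRestrict ε hε
  exact ⟨p, fun x hx => by simpa [hcoord] using hp ⟨x, hx⟩⟩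

lemma hasFDerivAt_polyFun [Fintype ι] (p : MvPolynomial ι ℝ) (x : EuclideanSpace ℝ ι) :
    HasFDerivAt (polyFun p)
      (∑ i, polyFun (pderiv i p) x • (EuclideanSpace.proj i : EuclideanSpace ℝ ι →L[ℝ] ℝ)) x := by
  classical
  induction p using MvPolynomial.induction_on with
  | C a => simpa only [polyFun_C, pderiv_C, map_zero, Pi.zero_apply, zero_smul,
      Finset.sum_const_zero] using hasFDerivAt_const a x
  | add p q hp hq =>
    simpa [add_smul, Finset.sum_add_distrib] using hp.add hq
  | mul_X p n hp =>
    have hX : HasFDerivAt (polyFun (X n))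
        (EuclideanSpace.proj n : EuclideanSpace ℝ ι →L[ℝ] ℝ) x := by
      rw [polyFun_X]
      exact (EuclideanSpace.proj n : EuclideanSpace ℝ ι →L[ℝ] ℝ).hasFDerivAt
    rw [map_mul]
    refine (hp.mul hX).congr_fderiv ?_
    simp [Derivation.leibniz, pderiv_X, Pi.single_apply, add_smul, Finset.sum_add_distrib, mul_smul,
      Finset.smul_sum, apply_ite, ite_apply]

lemma fderiv_polyFun_single [Finite ι] [DecidableEq ι] (p : MvPolynomial ι ℝ)
    (x : EuclideanSpace ℝ ι) (i : ι) :
    fderiv ℝ (polyFun p) x (EuclideanSpace.single i 1) = polyFun (pderiv i p) x := by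
  have := Fintype.ofFinite ι
  simp [(hasFDerivAt_polyFun p x).fderiv, sum_apply]

variable [Fintype ι]

lemma contDiff_polyFun (p : MvPolynomial ι ℝ) {n : WithTop ℕ∞} : ContDiff ℝ n (polyFun p) := by
  induction p using MvPolynomial.induction_on with
  | C a => simpa only [polyFun_C] using contDiff_const
  | add p q hp hq =>
    rw [map_add]
    exact hp.add hq
  | mul_X p i hp =>
    rw [map_mul, polyFun_X]
    exact hp.mul (EuclideanSpace.proj i : EuclideanSpace ℝ ι →L[ℝ] ℝ).contDiff

/-- The Laplace operator on polynomials. -/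
noncomputable def polyLaplacian : MvPolynomial ι ℝ →ₗ[ℝ] MvPolynomial ι ℝ :=
  ∑ i, (pderiv i).toLinearMap ∘ₗ (pderiv i).toLinearMap

lemma polyLaplacian_apply (p : MvPolynomial ι ℝ) :
    polyLaplacian p = ∑ i, pderiv i (pderiv i p) := by
  simp [polyLaplacian]

lemma laplacian_polyFun (p : MvPolynomial ι ℝ) : Δ (polyFun p) = polyFun (polyLaplacian p) := by
  classical
  ext x
  have hdiff : DifferentiableAt ℝ (fderiv ℝ (polyFun p)) x :=
    ((contDiff_polyFun p (n := 2)).fderiv_right (m := 1) (by norm_num)).differentiable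
      one_ne_zero x
  rw [laplacian_eq_sum_fderiv_fderiv_apply (EuclideanSpace.basisFun ι ℝ) hdiff]
  simp only [EuclideanSpace.basisFun_apply, fderiv_polyFun_single, polyLaplacian_apply, map_sum,
    Finset.sum_apply]

lemma totalDegree_polyLaplacian_le (p : MvPolynomial ι ℝ) :
    (polyLaplacian p).totalDegree ≤ p.totalDegree - 2 := by
  rw [polyLaplacian_apply]
  refine totalDegree_finsetSum_le fun i _ => ?_
  have h₁ := totalDegree_pderiv_le i (pderiv i p)
  have h₂ := totalDegree_pderiv_le i p
  lia

lemma polyLaplacian_pderiv (i : ι) (p : MvPolynomial ι ℝ) :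
    polyLaplacian (pderiv i p) = pderiv i (polyLaplacian p) := by
  simp only [polyLaplacian_apply, map_sum, pderiv_comm _ i]

lemma polyLaplacian_mul (p q : MvPolynomial ι ℝ) :
    polyLaplacian (p * q) =
      polyLaplacian p * q + 2 * ∑ i, pderiv i p * pderiv i q + p * polyLaplacian q := by
  simp only [polyLaplacian_apply, Finset.sum_mul, Finset.mul_sum, ← Finset.sum_add_distrib]
  refine Finset.sum_congr rfl fun i _ => ?_
  simp only [Derivation.leibniz, smul_eq_mul, map_add]
  ring

lemma polyLaplacian_X_sub_C (i : ι) (a : ℝ) : polyLaplacian (X i - C a) = 0 := by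
  classical
  simp [polyLaplacian_apply, pderiv_X, Pi.single_apply, apply_ite]

lemma polyLaplacian_X_sub_C_mul (i : ι) (a : ℝ) (p : MvPolynomial ι ℝ) :
    polyLaplacian ((X i - C a) * p) = 2 * pderiv i p + (X i - C a) * polyLaplacian p := by
  classical
  rw [polyLaplacian_mul, polyLaplacian_X_sub_C]
  simp [pderiv_X, Pi.single_apply]

/-- The polynomial defining the function `x ↦ ‖x - c‖ ^ 2`. -/
noncomputable def distSqPoly (c : EuclideanSpace ℝ ι) : MvPolynomial ι ℝ :=
  ∑ i, (X i - C (c i)) * (X i - C (c i))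

lemma polyFun_distSqPoly (c x : EuclideanSpace ℝ ι) : polyFun (distSqPoly c) x = ‖x - c‖ ^ 2 := by
  rw [EuclideanSpace.real_norm_sq_eq]
  simp [distSqPoly, Finset.sum_apply, sq]

lemma totalDegree_distSqPoly_le (c : EuclideanSpace ℝ ι) : (distSqPoly c).totalDegree ≤ 2 := by
  refine totalDegree_finsetSum_le fun i _ => (totalDegree_mul _ _).trans ?_
  have hlinear : (X i - C (c i) : MvPolynomial ι ℝ).totalDegree ≤ 1 :=
    (totalDegree_sub _ _).trans (by simp)
  exact Nat.add_le_add hlinear hlinear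

lemma polyLaplacian_distSqPoly (c : EuclideanSpace ℝ ι) :
    polyLaplacian (distSqPoly c) = C (2 * (Fintype.card ι : ℝ)) := by
  simp only [distSqPoly, map_sum, polyLaplacian_X_sub_C_mul, polyLaplacian_X_sub_C]
  simp [mul_comm, map_ofNat C 2]

end Polynomials

section HarmonicPolynomials

open MvPolynomial

variable {ι : Type*} [Fintype ι]

/-- The polynomial defining the function `x ↦ R ^ 2 - ‖x - c‖ ^ 2`, which vanishes on `sphere c R`
and is positive inside. -/
noncomputable def ballPoly (c : EuclideanSpace ℝ ι) (R : ℝ) : MvPolynomial ι ℝ :=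
  C (R ^ 2) - distSqPoly c

lemma polyFun_ballPoly (c x : EuclideanSpace ℝ ι) (R : ℝ) :
    polyFun (ballPoly c R) x = R ^ 2 - ‖x - c‖ ^ 2 := by
  simp [ballPoly, polyFun_distSqPoly]

lemma polyFun_ballPoly_mul_eq_zero {c x : EuclideanSpace ℝ ι} {R : ℝ} (hx : x ∈ sphere c R)
    (q : MvPolynomial ι ℝ) : polyFun (ballPoly c R * q) x = 0 := by
  rw [map_mul, Pi.mul_apply, polyFun_ballPoly, mem_sphere_iff_norm.1 hx, sub_self, zero_mul]

lemma totalDegree_polyLaplacian_ballPoly_mul_le (c : EuclideanSpace ℝ ι) (R : ℝ)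
    (q : MvPolynomial ι ℝ) : (polyLaplacian (ballPoly c R * q)).totalDegree ≤ q.totalDegree := by
  have hball : (ballPoly c R).totalDegree ≤ 2 :=
    (totalDegree_sub _ _).trans
      (max_le (totalDegree_C (R ^ 2) ▸ zero_le_two) (totalDegree_distSqPoly_le c))
  have hmul := totalDegree_mul (ballPoly c R) q
  have hlap := totalDegree_polyLaplacian_le (ballPoly c R * q)
  omega

variable [Nonempty ι]

lemma integral_sphereUniform_polyFun {p : MvPolynomial ι ℝ} (hp : polyLaplacian p = 0)
    (x : EuclideanSpace ℝ ι) {r : ℝ} (hr : 0 ≤ r) :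
    ∫ z, polyFun p z ∂sphereUniform x r = polyFun p x :=
  integral_sphereUniform_eq (contDiff_polyFun p) hr fun s _ => by simp [laplacian_polyFun, hp]

lemma abs_polyFun_le_of_sphere {p : MvPolynomial ι ℝ} (hp : polyLaplacian p = 0)
    {c : EuclideanSpace ℝ ι} {R B : ℝ} (hR : R ≠ 0) (hB : ∀ z ∈ sphere c R, |polyFun p z| ≤ B)
    {x : EuclideanSpace ℝ ι} (hx : x ∈ closedBall c R) : |polyFun p x| ≤ B := by
  have hcont : ∀ q : MvPolynomial ι ℝ, Continuous (polyFun q) := fun q =>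
    (contDiff_polyFun q (n := 0)).continuous
  have hmax : ∀ q : MvPolynomial ι ℝ, polyLaplacian q = 0 → (∀ z ∈ sphere c R, polyFun q z ≤ B) →
      polyFun q x ≤ B := by
    intro q hq hqB
    refine le_of_le_on_frontier (isBounded_ball (x := c) (r := R))
      ((hcont q).upperSemicontinuous.upperSemicontinuousOn _) (fun y hy => ?_)
      (by rwa [frontier_ball c hR]) (by rwa [closure_ball c hR])
    obtain ⟨r, hr, hball⟩ := nhds_basis_closedBall.mem_iff.1 (isOpen_ball.mem_nhds hy)
    exact ⟨r, hr, hball, integrable_sphereUniform hr.le (hcont q).continuousOn,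
      (integral_sphereUniform_polyFun hq y hr.le).ge⟩
  refine abs_le'.2 ⟨hmax p hp fun z hz => (le_abs_self _).trans (hB z hz), ?_⟩
  have hneg := hmax (-p) (by rw [map_neg, hp, neg_zero]) fun z hz => by
    rw [map_neg]
    exact (neg_le_abs _).trans (hB z hz)
  rwa [map_neg] at hneg

lemma eq_zero_of_polyLaplacian_ballPoly_mul_eq_zero {c : EuclideanSpace ℝ ι} {R : ℝ} (hR : 0 < R)
    {q : MvPolynomial ι ℝ} (hq : polyLaplacian (ballPoly c R * q) = 0) : q = 0 := by
  refine eq_zero_of_polyFun_eq_zero (isOpen_ball (x := c)) ⟨c, mem_ball_self hR⟩ fun x hx => ?_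
  have hprod : polyFun (ballPoly c R * q) x = 0 :=
    abs_nonpos_iff.1 <| abs_polyFun_le_of_sphere hq hR.ne'
      (fun z hz => by rw [polyFun_ballPoly_mul_eq_zero hz, abs_zero]) (ball_subset_closedBall hx)
  rw [map_mul, Pi.mul_apply, polyFun_ballPoly] at hprod
  refine (mul_eq_zero.1 hprod).resolve_left (sub_pos.2 ?_).ne'
  exact pow_lt_pow_left₀ (mem_ball_iff_norm.1 hx) (norm_nonneg _) two_ne_zero

-- `q ↦ Δ((R² - |x - c|²) q)` maps polynomials of degree at most `d` injectively to themselves, so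
-- it is surjective there, and `p - (R² - |x - c|²) q` is harmonic for a suitable `q`.
lemma exists_harmonic_polyFun_eqOn_sphere (c : EuclideanSpace ℝ ι) {R : ℝ} (hR : 0 < R)
    (p : MvPolynomial ι ℝ) :
    ∃ h, polyLaplacian h = 0 ∧ Set.EqOn (polyFun h) (polyFun p) (sphere c R) := by
  let V := restrictTotalDegree ι ℝ p.totalDegree
  let T := polyLaplacian ∘ₗ LinearMap.mulLeft ℝ (ballPoly c R)
  have hTV : ∀ q ∈ V, T q ∈ V := fun q hq =>
    (mem_restrictTotalDegree _ _ _).2 <| (totalDegree_polyLaplacian_ballPoly_mul_le c R q).trans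
      ((mem_restrictTotalDegree _ _ _).1 hq)
  have hinj : Function.Injective (T.restrict hTV) :=
    (injective_iff_map_eq_zero _).2 fun q hq => Subtype.ext <|
      eq_zero_of_polyLaplacian_ballPoly_mul_eq_zero hR (congrArg Subtype.val hq)
  have hpV : polyLaplacian p ∈ V :=
    (mem_restrictTotalDegree _ _ _).2 ((totalDegree_polyLaplacian_le p).trans (Nat.sub_le _ _))
  obtain ⟨⟨q, _⟩, hq⟩ := LinearMap.injective_iff_surjective.1 hinj ⟨_, hpV⟩
  have hΔ : polyLaplacian (ballPoly c R * q) = polyLaplacian p := congrArg Subtype.val hq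
  refine ⟨p - ballPoly c R * q, by rw [map_sub, hΔ, sub_self], fun x hx => ?_⟩
  rw [map_sub, Pi.sub_apply, polyFun_ballPoly_mul_eq_zero hx, sub_zero]

-- Subtracting `a |x - x₀|² / m` with `a = ∂ᵢh(x₀)` from `(xᵢ - x₀ᵢ) h` leaves a polynomial whose
-- Laplacian `2 (∂ᵢh - a)` has zero mean over every sphere centred at `x₀`.
lemma integral_coord_sub_mul_polyFun {h : MvPolynomial ι ℝ} (hh : polyLaplacian h = 0)
    (x : EuclideanSpace ℝ ι) {r : ℝ} (hr : 0 ≤ r) (i : ι) :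
    ∫ z, (z i - x i) * polyFun h z ∂sphereUniform x r
      = polyFun (pderiv i h) x / Fintype.card ι * r ^ 2 := by
  set a := polyFun (pderiv i h) x
  let f : MvPolynomial ι ℝ := (X i - C (x i)) * h - (a / Fintype.card ι) • distSqPoly x
  let g := pderiv i h - C a
  have hg : polyLaplacian g = 0 := by
    simp [g, polyLaplacian_pderiv, hh, polyLaplacian_apply (C a)]
  have hΔf : polyLaplacian f = (2 : ℝ) • g := by
    have hcard : a / Fintype.card ι * (2 * Fintype.card ι) = 2 * a := by
      field_simp
    rw [map_sub, map_smul, polyLaplacian_X_sub_C_mul, polyLaplacian_distSqPoly, hh, smul_eq_C_mul,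
      ← C_mul, hcard, smul_eq_C_mul, C_mul, map_ofNat]
    ring
  have hf : ∫ z, polyFun f z ∂sphereUniform x r = 0 := by
    rw [integral_sphereUniform_eq (contDiff_polyFun f) hr fun s hs => ?_]
    · simp [f, polyFun_distSqPoly]
    · simp only [laplacian_polyFun, hΔf, map_smul, Pi.smul_apply, integral_smul,
        integral_sphereUniform_polyFun hg x hs.1.le]
      simp [g, a]
  have hf_sphere : ∀ᵐ z ∂sphereUniform x r,
      (z i - x i) * polyFun h z = polyFun f z + a / Fintype.card ι * r ^ 2 := by
    filter_upwards [ae_sphereUniform_mem_sphere x hr] with z hz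
    simp [f, polyFun_distSqPoly, mem_sphere_iff_norm.1 hz]
  rw [integral_congr_ae hf_sphere, integral_add (integrable_sphereUniform hr
    (contDiff_polyFun f (n := 0)).continuous.continuousOn) (integrable_const _), hf]
  simp

lemma abs_polyFun_pderiv_le {h : MvPolynomial ι ℝ} (hh : polyLaplacian h = 0)
    {x : EuclideanSpace ℝ ι} {r B : ℝ} (hr : 0 < r) (hB : ∀ z ∈ sphere x r, |polyFun h z| ≤ B)
    (i : ι) : |polyFun (pderiv i h) x| ≤ Fintype.card ι / r * B := by
  have hcard : (0 : ℝ) < Fintype.card ι := Nat.cast_pos.2 Fintype.card_pos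
  have hbound : ‖∫ z, (z i - x i) * polyFun h z ∂sphereUniform x r‖ ≤ r * B := by
    refine (norm_integral_le_of_norm_le_const ?_).trans_eq (by rw [probReal_univ, mul_one])
    filter_upwards [ae_sphereUniform_mem_sphere x hr.le] with z hz
    rw [norm_mul]
    exact mul_le_mul ((PiLp.norm_apply_le (z - x) i).trans_eq (mem_sphere_iff_norm.1 hz)) (hB z hz)
      (norm_nonneg _) hr.le
  rw [integral_coord_sub_mul_polyFun hh x hr.le, Real.norm_eq_abs, abs_mul, abs_div,
    Nat.abs_cast, abs_of_pos (pow_pos hr 2), div_mul_eq_mul_div, div_le_iff₀ hcard] at hbound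
  rw [div_mul_eq_mul_div, le_div_iff₀ hr]
  exact le_of_mul_le_mul_left (by linarith) hr

end HarmonicPolynomials

section MeanValue

variable {E : Type*} [NormedAddCommGroup E] [InnerProductSpace ℝ E] [MeasurableSpace E]
  [BorelSpace E]

/-- The mean value property of `f` over all spheres bounding closed balls inside `D`. Integrability
is part of the property, since the integral of a non-integrable function is `0`. -/
def MeanValueOn (f : E → ℝ) (D : Set E) : Prop :=
  ∀ ⦃x r⦄, 0 < r → closedBall x r ⊆ D →
    Integrable f (sphereUniform x r) ∧ ∫ z, f z ∂sphereUniform x r = f x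

variable {f g : E → ℝ} {D : Set E}

lemma MeanValueOn.sub (hf : MeanValueOn f D) (hg : MeanValueOn g D) : MeanValueOn (f - g) D :=
  fun x r hr hball => ⟨(hf hr hball).1.sub (hg hr hball).1, by
    simp [integral_sub (hf hr hball).1 (hg hr hball).1, (hf hr hball).2, (hg hr hball).2]⟩

lemma MeanValueOn.mono {D' : Set E} (hf : MeanValueOn f D) (hD : D' ⊆ D) : MeanValueOn f D' :=
  fun _ _ hr hball => hf hr (hball.trans hD)

variable [FiniteDimensional ℝ E] [Nontrivial E]

lemma meanValueOn_of_approx (hf : ContinuousOn f D)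
    (happrox : ∀ ε > 0, ∃ g, MeanValueOn g D ∧ ∀ x ∈ D, |g x - f x| ≤ ε) : MeanValueOn f D := by
  intro x r hr hball
  have hint : Integrable f (sphereUniform x r) :=
    integrable_sphereUniform hr.le (hf.mono (sphere_subset_closedBall.trans hball))
  refine ⟨hint, eq_of_forall_dist_le fun ε hε => ?_⟩
  obtain ⟨g, hg, hgf⟩ := happrox (ε / 2) (half_pos hε)
  obtain ⟨hgint, hgmean⟩ := hg hr hball
  have hmeans : |∫ z, (f z - g z) ∂sphereUniform x r| ≤ ε / 2 := by
    have hbound : ∀ᵐ z ∂sphereUniform x r, ‖f z - g z‖ ≤ ε / 2 := by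
      filter_upwards [ae_sphereUniform_mem_sphere x hr.le] with z hz
      rw [norm_sub_rev]
      exact hgf z (hball (sphere_subset_closedBall hz))
    simpa using norm_integral_le_of_norm_le_const hbound
  rw [integral_sub hint hgint, hgmean] at hmeans
  calc dist (∫ z, f z ∂sphereUniform x r) (f x)
      ≤ |(∫ z, f z ∂sphereUniform x r) - g x| + |g x - f x| := abs_sub_le _ _ _
    _ ≤ ε := by linarith [hgf x (hball (mem_closedBall_self hr.le))]

lemma MeanValueOn.le_of_le_on_frontier (hD : IsOpen D) (hbdd : Bornology.IsBounded D)
    (hcont : ContinuousOn f (closure D)) (hf : MeanValueOn f D) {c : ℝ}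
    (hc : ∀ x ∈ frontier D, f x ≤ c) {x : E} (hx : x ∈ closure D) : f x ≤ c := by
  refine Kellogg.le_of_le_on_frontier hbdd hcont.upperSemicontinuousOn (fun y hy => ?_) hc hx
  obtain ⟨r, hr, hball⟩ := nhds_basis_closedBall.mem_iff.1 (hD.mem_nhds hy)
  exact ⟨r, hr, hball, (hf hr hball).1, (hf hr hball).2.ge⟩

lemma MeanValueOn.eqOn_of_eqOn_frontier (hD : IsOpen D) (hbdd : Bornology.IsBounded D)
    (hfcont : ContinuousOn f (closure D)) (hgcont : ContinuousOn g (closure D))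
    (hf : MeanValueOn f D) (hg : MeanValueOn g D) (hfg : Set.EqOn f g (frontier D)) :
    Set.EqOn f g (closure D) := fun _ hx => le_antisymm
  (sub_nonpos.1 <| (hf.sub hg).le_of_le_on_frontier hD hbdd (hfcont.sub hgcont)
    (fun _ hy => sub_nonpos.2 (hfg hy).le) hx)
  (sub_nonpos.1 <| (hg.sub hf).le_of_le_on_frontier hD hbdd (hgcont.sub hfcont)
    (fun _ hy => sub_nonpos.2 (hfg hy).ge) hx)

end MeanValue

section HarmonicLimits

open MvPolynomial Filter Topology

lemma tendstoUniformlyOn_limUnder {X Y : Type*} [UniformSpace Y] [CompleteSpace Y] [Nonempty Y]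
    {F : ℕ → X → Y} {s : Set X} (hF : UniformCauchySeqOn F atTop s) :
    TendstoUniformlyOn F (fun x => limUnder atTop fun n => F n x) atTop s :=
  hF.tendstoUniformlyOn_of_tendsto fun _ hx => (hF.cauchySeq hx).tendsto_limUnder

variable {ι : Type*} [Fintype ι] {U : Set (EuclideanSpace ℝ ι)} {P : ℕ → MvPolynomial ι ℝ}
  {g : EuclideanSpace ℝ ι → ℝ}

lemma tendstoLocallyUniformlyOn_sum_smul_proj {F : ℕ → ι → EuclideanSpace ℝ ι → ℝ}
    {f : ι → EuclideanSpace ℝ ι → ℝ}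
    (hF : ∀ i, TendstoLocallyUniformlyOn (fun n => F n i) (f i) atTop U) :
    TendstoLocallyUniformlyOn
      (fun n x => ∑ i, F n i x • (EuclideanSpace.proj i : EuclideanSpace ℝ ι →L[ℝ] ℝ))
      (fun x => ∑ i, f i x • EuclideanSpace.proj i) atTop U := by
  classical
  induction (Finset.univ : Finset ι) using Finset.induction_on with
  | empty =>
    simp only [Finset.sum_empty]
    exact fun u hu x _ => ⟨U, self_mem_nhdsWithin, .of_forall fun _ _ _ => refl_mem_uniformity hu⟩
  | insert i s hi ih =>
    simp only [Finset.sum_insert hi]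
    exact ((ContinuousLinearMap.toSpanSingleton ℝ (EuclideanSpace.proj i :
      EuclideanSpace ℝ ι →L[ℝ] ℝ)).uniformContinuous.comp_tendstoLocallyUniformlyOn (hF i)).add ih

lemma hasFDerivAt_of_tendstoLocallyUniformlyOn_polyFun (hU : IsOpen U)
    (hg : TendstoLocallyUniformlyOn (fun n => polyFun (P n)) g atTop U)
    {g' : ι → EuclideanSpace ℝ ι → ℝ}
    (hg' : ∀ i, TendstoLocallyUniformlyOn (fun n => polyFun (pderiv i (P n))) (g' i) atTop U)
    {x : EuclideanSpace ℝ ι} (hx : x ∈ U) :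
    HasFDerivAt g (∑ i, g' i x • (EuclideanSpace.proj i : EuclideanSpace ℝ ι →L[ℝ] ℝ)) x :=
  hasFDerivAt_of_tendstoLocallyUniformlyOn hU (tendstoLocallyUniformlyOn_sum_smul_proj hg')
    (fun n y _ => hasFDerivAt_polyFun (P n) y) (fun _ hy => hg.tendsto_at hy) hx

variable [Nonempty ι]

lemma uniformCauchySeqOn_closedBall_of_sphere (hP : ∀ n, polyLaplacian (P n) = 0)
    {c : EuclideanSpace ℝ ι} {R : ℝ} (hR : R ≠ 0)
    (hsphere : UniformCauchySeqOn (fun n => polyFun (P n)) atTop (sphere c R)) :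
    UniformCauchySeqOn (fun n => polyFun (P n)) atTop (closedBall c R) := by
  rw [Metric.uniformCauchySeqOn_iff] at hsphere ⊢
  intro ε hε
  obtain ⟨N, hN⟩ := hsphere (ε / 2) (half_pos hε)
  refine ⟨N, fun n hn k hk x hx => lt_of_le_of_lt ?_ (half_lt_self hε)⟩
  have hharmonic : polyLaplacian (P n - P k) = 0 := by rw [map_sub, hP, hP, sub_self]
  have := abs_polyFun_le_of_sphere hharmonic hR (B := ε / 2)
    (fun z hz => by rw [map_sub]; exact (hN n hn k hk z hz).le) hx
  rwa [map_sub] at this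

lemma uniformCauchySeqOn_pderiv (hP : ∀ n, polyLaplacian (P n) = 0) {c : EuclideanSpace ℝ ι}
    {r R : ℝ} (hrR : r < R) (i : ι)
    (hcauchy : UniformCauchySeqOn (fun n => polyFun (P n)) atTop (closedBall c R)) :
    UniformCauchySeqOn (fun n => polyFun (pderiv i (P n))) atTop (closedBall c r) := by
  rw [Metric.uniformCauchySeqOn_iff] at hcauchy ⊢
  intro ε hε
  have hr : 0 < R - r := sub_pos.2 hrR
  have : (0 : ℝ) < Fintype.card ι := Nat.cast_pos.2 Fintype.card_pos
  obtain ⟨N, hN⟩ := hcauchy (ε / 2 / (Fintype.card ι / (R - r))) (by positivity)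
  refine ⟨N, fun n hn k hk x hx => lt_of_le_of_lt ?_ (half_lt_self hε)⟩
  have hsub : sphere x (R - r) ⊆ closedBall c R := sphere_subset_closedBall.trans
    (closedBall_subset_closedBall' (by linarith [mem_closedBall.1 hx]))
  have hharmonic : polyLaplacian (P n - P k) = 0 := by rw [map_sub, hP, hP, sub_self]
  have := abs_polyFun_pderiv_le hharmonic hr
    (fun z hz => by rw [map_sub]; exact (hN n hn k hk z (hsub hz)).le) i
  rwa [map_sub, map_sub, mul_div_cancel₀ _ (by positivity)] at this

lemma exists_tendstoLocallyUniformlyOn_pderiv (hU : IsOpen U) (hP : ∀ n, polyLaplacian (P n) = 0)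
    (hg : TendstoLocallyUniformlyOn (fun n => polyFun (P n)) g atTop U) (i : ι) :
    ∃ g', TendstoLocallyUniformlyOn (fun n => polyFun (pderiv i (P n))) g' atTop U := by
  refine ⟨fun x => limUnder atTop fun n => polyFun (pderiv i (P n)) x,
    tendstoLocallyUniformlyOn_of_forall_exists_nhds fun x hx => ?_⟩
  obtain ⟨r, hr, hball⟩ := nhds_basis_closedBall.mem_iff.1 (hU.mem_nhds hx)
  have hcauchy := ((tendstoLocallyUniformlyOn_iff_forall_isCompact hU).1 hg _ hball
    (isCompact_closedBall x r)).uniformCauchySeqOn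
  exact ⟨closedBall x (r / 2), nhdsWithin_le_nhds (closedBall_mem_nhds x (half_pos hr)),
    tendstoUniformlyOn_limUnder (uniformCauchySeqOn_pderiv hP (half_lt_self hr) i hcauchy)⟩

lemma contDiffOn_of_tendstoLocallyUniformlyOn_polyFun (hU : IsOpen U)
    (hP : ∀ n, polyLaplacian (P n) = 0)
    (hg : TendstoLocallyUniformlyOn (fun n => polyFun (P n)) g atTop U) (k : ℕ) :
    ContDiffOn ℝ k g U := by
  induction k generalizing P g with
  | zero =>
    exact contDiffOn_zero.2 <| hg.continuousOn <| .of_forall fun n =>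
      (contDiff_polyFun (P n) (n := 0)).continuous.continuousOn
  | succ k ih =>
    choose g' hg' using exists_tendstoLocallyUniformlyOn_pderiv hU hP hg
    have hderiv := fun x (hx : x ∈ U) =>
      hasFDerivAt_of_tendstoLocallyUniformlyOn_polyFun hU hg hg' hx
    rw [Nat.cast_succ, contDiffOn_succ_iff_fderiv_of_isOpen hU]
    refine ⟨fun x hx => (hderiv x hx).differentiableAt.differentiableWithinAt, by simp, ?_⟩
    refine ContDiffOn.congr (.sum fun i _ => ContDiffOn.smul (ih (fun n => ?_) (hg' i))
      contDiffOn_const) fun x hx => (hderiv x hx).fderiv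
    rw [polyLaplacian_pderiv, hP, map_zero]

lemma harmonicOnNhd_of_tendstoLocallyUniformlyOn_polyFun (hU : IsOpen U)
    (hP : ∀ n, polyLaplacian (P n) = 0)
    (hg : TendstoLocallyUniformlyOn (fun n => polyFun (P n)) g atTop U) :
    InnerProductSpace.HarmonicOnNhd g U := by
  classical
  have hcont : ContDiffOn ℝ 2 g U := contDiffOn_of_tendstoLocallyUniformlyOn_polyFun hU hP hg 2
  have hP' : ∀ i n, polyLaplacian (pderiv i (P n)) = 0 := fun i n => by
    rw [polyLaplacian_pderiv, hP, map_zero]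
  choose g' hg' using exists_tendstoLocallyUniformlyOn_pderiv hU hP hg
  choose g'' hg'' using fun i => exists_tendstoLocallyUniformlyOn_pderiv hU (hP' i) (hg' i)
  have hfderiv : ∀ i, ∀ x ∈ U, fderiv ℝ g x (EuclideanSpace.single i 1) = g' i x := fun i x hx => by
    rw [(hasFDerivAt_of_tendstoLocallyUniformlyOn_polyFun hU hg hg' hx).fderiv]
    simp [sum_apply]
  have hlaplacian : ∀ x ∈ U, Δ g x = 0 := by
    intro x hx
    have hC2 := hcont.contDiffAt (hU.mem_nhds hx)
    rw [laplacian_eq_sum_fderiv_fderiv_apply (EuclideanSpace.basisFun ι ℝ)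
      ((hC2.fderiv_right (m := 1) (by norm_num)).differentiableAt one_ne_zero)]
    have hsecond : ∀ i, fderiv ℝ (fun y => fderiv ℝ g y (EuclideanSpace.single i 1)) x
        (EuclideanSpace.single i 1) = g'' i i x := fun i => by
      rw [(Filter.eventuallyEq_of_mem (hU.mem_nhds hx) (hfderiv i)).fderiv_eq,
        (hasFDerivAt_of_tendstoLocallyUniformlyOn_polyFun hU (hg' i) (hg'' i) hx).fderiv]
      simp [sum_apply]
    simp only [EuclideanSpace.basisFun_apply, hsecond]
    refine tendsto_nhds_unique (tendsto_finsetSum _ fun i _ => (hg'' i i).tendsto_at hx) ?_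
    simp only [← Finset.sum_apply, ← map_sum, ← polyLaplacian_apply, hP]
    simp
  exact fun x hx => ⟨hcont.contDiffAt (hU.mem_nhds hx),
    eventuallyEq_of_mem (hU.mem_nhds hx) hlaplacian⟩

lemma exists_harmonicContOnCl_eqOn_sphere {c : EuclideanSpace ℝ ι} {R : ℝ} (hR : 0 < R)
    {f : EuclideanSpace ℝ ι → ℝ} (hf : ContinuousOn f (sphere c R)) :
    ∃ h, InnerProductSpace.HarmonicContOnCl h (ball c R) ∧ MeanValueOn h (closedBall c R) ∧
      Set.EqOn h f (sphere c R) := by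
  choose p hp using fun n : ℕ =>
    exists_polyFun_near (isCompact_sphere c R) hf (Nat.one_div_pos_of_nat (α := ℝ) (n := n))
  choose P hP hPp using fun n => exists_harmonic_polyFun_eqOn_sphere c hR (p n)
  have hsphere : TendstoUniformlyOn (fun n => polyFun (P n)) f atTop (sphere c R) := by
    refine Metric.tendstoUniformlyOn_iff.2 fun ε hε => ?_
    filter_upwards [tendsto_one_div_add_atTop_nhds_zero_nat.eventually (gt_mem_nhds hε)]
      with n hn x hx
    rw [hPp n hx, dist_comm]
    exact (hp n x hx).trans hn
  let h := fun x => limUnder atTop fun n => polyFun (P n) x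
  have hball : TendstoUniformlyOn (fun n => polyFun (P n)) h atTop (closedBall c R) :=
    tendstoUniformlyOn_limUnder
      (uniformCauchySeqOn_closedBall_of_sphere hP hR.ne' hsphere.uniformCauchySeqOn)
  have hPcont : ∀ n, Continuous (polyFun (P n)) := fun n =>
    (contDiff_polyFun (P n) (n := 0)).continuous
  have hcont : ContinuousOn h (closedBall c R) :=
    hball.continuousOn (.of_forall fun n => (hPcont n).continuousOn)
  refine ⟨h, .mk_ball (harmonicOnNhd_of_tendstoLocallyUniformlyOn_polyFun isOpen_ball hP
    (hball.mono ball_subset_closedBall).tendstoLocallyUniformlyOn) hcont,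
    meanValueOn_of_approx hcont fun ε hε => ?_, fun x hx => tendsto_nhds_unique
      (hball.tendsto_at (sphere_subset_closedBall hx)) (hsphere.tendsto_at hx)⟩
  obtain ⟨n, hn⟩ := (Metric.tendstoUniformlyOn_iff.1 hball ε hε).exists
  refine ⟨polyFun (P n), fun x r hr _ => ⟨integrable_sphereUniform hr.le (hPcont n).continuousOn,
    integral_sphereUniform_polyFun (hP n) x hr.le⟩, fun x hx => ?_⟩
  rw [← Real.dist_eq, dist_comm]
  exact (hn x hx).le

lemma MeanValueOn.harmonicOnNhd (hU : IsOpen U) (hcont : ContinuousOn g U)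
    (hg : MeanValueOn g U) : InnerProductSpace.HarmonicOnNhd g U := by
  intro x hx
  obtain ⟨r, hr, hball⟩ := nhds_basis_closedBall.mem_iff.1 (hU.mem_nhds hx)
  obtain ⟨h, hharmonic, hmean, hsphere⟩ := exists_harmonicContOnCl_eqOn_sphere hr
    (hcont.mono (sphere_subset_closedBall.trans hball))
  have heq : Set.EqOn g h (closure (ball x r)) :=
    MeanValueOn.eqOn_of_eqOn_frontier isOpen_ball isBounded_ball
      (hcont.mono (closure_ball_subset_closedBall.trans hball)) hharmonic.continuousOn
      (hg.mono (ball_subset_closedBall.trans hball)) (hmean.mono ball_subset_closedBall)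
      (by rw [frontier_ball x hr.ne']; exact hsphere.symm)
  exact (InnerProductSpace.harmonicAt_congr_nhds (eventuallyEq_of_mem (ball_mem_nhds x hr)
    (heq.mono subset_closure))).2 (hharmonic.harmonicOnNhd x (mem_ball_self hr))

end HarmonicLimits

section SubMean

open Filter Topology

lemma eventually_pos_and_closedBall_subset {X : Type*} [PseudoMetricSpace X] {D : Set X}
    (hD : IsOpen D) {x : X} (hx : x ∈ D) :
    ∀ᶠ r in 𝓝[>] (0 : ℝ), 0 < r ∧ closedBall x r ⊆ D := by
  filter_upwards [self_mem_nhdsWithin, nhdsWithin_le_nhds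
    (eventually_closedBall_subset (hD.mem_nhds hx))] with r hr hball using ⟨hr, hball⟩

variable {E : Type*} [NormedAddCommGroup E] [InnerProductSpace ℝ E] [MeasurableSpace E]
  [BorelSpace E]

/-- The local sub-mean value property: `f` is at most its mean over every small sphere centred at
a point of `D`. For continuous `f` this is subharmonicity; asking only for small radii makes it
easy to check, and `SubMeanOn.le_integral_sphereUniform` recovers the inequality for all radii. -/
def SubMeanOn (f : E → ℝ) (D : Set E) : Prop :=
  ∀ x ∈ D, ∀ᶠ r in 𝓝[>] 0, f x ≤ ∫ z, f z ∂sphereUniform x r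

lemma SubMeanOn.mono {f : E → ℝ} {D D' : Set E} (hf : SubMeanOn f D) (hD : D' ⊆ D) :
    SubMeanOn f D' := fun x hx => hf x (hD hx)

lemma MeanValueOn.subMeanOn {f : E → ℝ} {D : Set E} (hD : IsOpen D) (hf : MeanValueOn f D) :
    SubMeanOn f D := fun x hx => by
  filter_upwards [eventually_pos_and_closedBall_subset hD hx] with r ⟨hr, hball⟩
  exact (hf hr hball).2.ge

variable [FiniteDimensional ℝ E] [Nontrivial E]

lemma subMeanOn_of_laplacian_nonneg {f : E → ℝ} (hf : ContDiff ℝ 2 f) {D : Set E} (hD : IsOpen D)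
    (hΔ : ∀ x ∈ D, 0 ≤ Δ f x) : SubMeanOn f D := fun x hx => by
  filter_upwards [eventually_pos_and_closedBall_subset hD hx] with r ⟨hr, hball⟩
  exact le_integral_sphereUniform_of_laplacian_nonneg hf hr.le
    fun z hz => hΔ z (hball (ball_subset_closedBall hz))

lemma integral_sphereUniform_mono {f g : E → ℝ} {x : E} {r : ℝ} (hr : 0 ≤ r)
    (hf : ContinuousOn f (sphere x r)) (hg : ContinuousOn g (sphere x r))
    (hfg : ∀ z ∈ sphere x r, f z ≤ g z) :
    ∫ z, f z ∂sphereUniform x r ≤ ∫ z, g z ∂sphereUniform x r :=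
  integral_mono_ae (integrable_sphereUniform hr hf) (integrable_sphereUniform hr hg)
    ((ae_sphereUniform_mem_sphere x hr).mono hfg)

lemma SubMeanOn.le_of_meanValueOn {f h : E → ℝ} {D : Set E} (hD : IsOpen D)
    (hbdd : Bornology.IsBounded D) (hfcont : ContinuousOn f (closure D)) (hf : SubMeanOn f D)
    (hhcont : ContinuousOn h (closure D)) (hh : MeanValueOn h D)
    (hfh : ∀ x ∈ frontier D, f x ≤ h x) {x : E} (hx : x ∈ closure D) : f x ≤ h x := by
  refine sub_nonpos.1 (le_of_le_on_frontier (w := f - h) hbdd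
    (hfcont.sub hhcont).upperSemicontinuousOn (fun y hy => ?_) (fun y hy => sub_nonpos.2 (hfh y hy))
    hx)
  obtain ⟨r, hfr, hr, hball⟩ := ((hf y hy).and (eventually_pos_and_closedBall_subset hD hy)).exists
  obtain ⟨hhint, hhr⟩ := hh hr hball
  have hfint : Integrable f (sphereUniform y r) := integrable_sphereUniform hr.le
    (hfcont.mono (sphere_subset_closedBall.trans (hball.trans subset_closure)))
  refine ⟨r, hr, hball, hfint.sub hhint, ?_⟩
  simp only [Pi.sub_apply]
  rw [integral_sub hfint hhint, hhr]
  exact sub_le_sub_right hfr _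

lemma SubMeanOn.sup {f g : E → ℝ} {D : Set E} (hD : IsOpen D) (hfcont : ContinuousOn f D)
    (hgcont : ContinuousOn g D) (hf : SubMeanOn f D) (hg : SubMeanOn g D) :
    SubMeanOn (f ⊔ g) D := fun x hx => by
  filter_upwards [hf x hx, hg x hx, eventually_pos_and_closedBall_subset hD hx]
    with r hfr hgr ⟨hr, hball⟩
  have hsphere := sphere_subset_closedBall.trans hball
  have hfs := hfcont.mono hsphere
  have hgs := hgcont.mono hsphere
  exact sup_le
    (hfr.trans (integral_sphereUniform_mono hr.le hfs (hfs.sup hgs) fun _ _ => le_sup_left))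
    (hgr.trans (integral_sphereUniform_mono hr.le hgs (hfs.sup hgs) fun _ _ => le_sup_right))

lemma SubMeanOn.piecewise {f g : E → ℝ} {D U : Set E} [∀ x, Decidable (x ∈ U)] (hD : IsOpen D)
    (hU : IsOpen U) (hfcont : ContinuousOn f D) (hcont : ContinuousOn (U.piecewise g f) D)
    (hf : SubMeanOn f D) (hg : SubMeanOn g U) (hfg : ∀ x ∈ U, f x ≤ g x) :
    SubMeanOn (U.piecewise g f) D := by
  intro x hx
  by_cases hxU : x ∈ U
  · filter_upwards [hg x hxU, eventually_pos_and_closedBall_subset hU hxU] with r hgr ⟨hr, hball⟩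
    rw [Set.piecewise_eq_of_mem _ _ _ hxU]
    refine hgr.trans_eq (integral_congr_ae ?_)
    filter_upwards [ae_sphereUniform_mem_sphere x hr.le] with z hz
    exact (Set.piecewise_eq_of_mem _ _ _ (hball (sphere_subset_closedBall hz))).symm
  · filter_upwards [hf x hx, eventually_pos_and_closedBall_subset hD hx] with r hfr ⟨hr, hball⟩
    have hsphere := sphere_subset_closedBall.trans hball
    rw [Set.piecewise_eq_of_notMem _ _ _ hxU]
    refine hfr.trans (integral_sphereUniform_mono hr.le (hfcont.mono hsphere) (hcont.mono hsphere)
      fun z _ => ?_)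
    by_cases hz : z ∈ U
    · simpa only [Set.piecewise_eq_of_mem _ _ _ hz] using hfg z hz
    · rw [Set.piecewise_eq_of_notMem _ _ _ hz]

end SubMean

section Perron

open Filter Topology

lemma exists_monotone_tendsto_ciSup {X : Type*} [TopologicalSpace X] [SecondCountableTopology X]
    {F : Set (X → ℝ)} (hF : F.Nonempty) (hsup : SupClosed F) {K : Set X}
    (hcont : ∀ s ∈ F, ContinuousOn s K)
    (hbdd : ∀ x ∈ K, BddAbove (Set.range fun s : F => s.1 x)) :
    ∃ t : ℕ → X → ℝ, (∀ n, t n ∈ F) ∧ Monotone t ∧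
      ∀ x ∈ K, Tendsto (fun n => t n x) atTop (𝓝 (⨆ s : F, s.1 x)) := by
  obtain ⟨s₀, hs₀⟩ := hF
  rcases K.eq_empty_or_nonempty with rfl | hK
  · exact ⟨fun _ => s₀, fun _ => hs₀, monotone_const, by simp⟩
  have : Nonempty K := hK.to_subtype
  have : Nonempty F := ⟨⟨s₀, hs₀⟩⟩
  have hlub : IsLUB (K.domRestrict '' F) (fun x : K => ⨆ s : F, s.1 x) := by
    refine isLUB_pi.2 fun x => ?_
    convert isLUB_ciSup (hbdd x x.2) using 1
    ext; simp [Set.domRestrict_apply]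
  obtain ⟨G, hGF, hGcountable, hG⟩ := exists_countable_lowerSemicontinuous_isLUB (by
    rintro _ ⟨s, hs, rfl⟩
    exact (hcont s hs).domRestrict.lowerSemicontinuous) hlub
  obtain ⟨g, rfl⟩ := hGcountable.exists_eq_range hG.nonempty
  choose t htF htg using fun n => hGF (Set.mem_range_self n)
  refine ⟨partialSups t, fun n => ?_, partialSups_monotone t, fun x hx => ?_⟩
  · rw [partialSups_eq_sup'_range]
    exact hsup.finsetSup'_mem _ fun i _ => htF i
  · refine tendsto_atTop_isLUB (fun _ _ hij => partialSups_monotone t hij x) ?_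
    have := isLUB_pi.1 hG ⟨x, hx⟩
    simp only [Pi.partialSups_apply]
    rw [IsLUB, upperBounds_range_partialSups, ← IsLUB]
    convert this using 1
    ext; simp [← htg, Set.domRestrict_apply]

/-- The subsolutions of the Dirichlet problem on `D` with boundary values `q`: the continuous
subharmonic functions that agree with `q` on the frontier of `D`. -/
def perronFamily {E : Type*} [NormedAddCommGroup E] [InnerProductSpace ℝ E] [MeasurableSpace E]
    [BorelSpace E] (D : Set E) (q : E → ℝ) : Set (E → ℝ) :=
  {s | ContinuousOn s (closure D) ∧ SubMeanOn s D ∧ Set.EqOn s q (frontier D)}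

/-- The Perron solution of the Dirichlet problem on `D` with boundary values `q`. The supremum is
taken in `ℝ`, so it is meaningful only where `perronFamily D q` is nonempty and bounded above. -/
noncomputable def perronSolution {E : Type*} [NormedAddCommGroup E] [InnerProductSpace ℝ E]
    [MeasurableSpace E] [BorelSpace E] (D : Set E) (q : E → ℝ) (x : E) : ℝ :=
  ⨆ s : perronFamily D q, s.1 x

variable {E : Type*} [NormedAddCommGroup E] [InnerProductSpace ℝ E] [MeasurableSpace E]
  [BorelSpace E] {D : Set E} {q : E → ℝ}

lemma perronSolution_eqOn_frontier (hq : q ∈ perronFamily D q) :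
    Set.EqOn (perronSolution D q) q (frontier D) := fun x hx => by
  have : Nonempty (perronFamily D q) := ⟨⟨q, hq⟩⟩
  simp only [perronSolution, fun s : perronFamily D q => s.2.2.2 hx, ciSup_const]

variable [FiniteDimensional ℝ E] [Nontrivial E]

lemma supClosed_perronFamily (hD : IsOpen D) : SupClosed (perronFamily D q) :=
  fun s ⟨hs, hsmean, hsq⟩ t ⟨ht, htmean, htq⟩ => ⟨hs.sup ht, hsmean.sup hD
    (hs.mono subset_closure) (ht.mono subset_closure) htmean, fun x hx => by simp [hsq hx, htq hx]⟩

lemma perronFamily_bddAbove (hD : IsOpen D) (hbdd : Bornology.IsBounded D)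
    (hq : q ∈ perronFamily D q) :
    ∃ B, ∀ s ∈ perronFamily D q, ∀ x ∈ closure D, s x ≤ B := by
  obtain ⟨B, hB⟩ := hbdd.isCompact_closure.exists_bound_of_continuousOn hq.1
  refine ⟨B, fun s ⟨hs, hsmean, hsq⟩ x hx => ?_⟩
  refine hsmean.le_of_meanValueOn (h := fun _ => B) hD hbdd hs continuousOn_const
    (fun x r _ _ => ⟨integrable_const B, by simp⟩) (fun z hz => ?_) hx
  rw [hsq hz]
  exact (le_abs_self _).trans (hB z (frontier_subset_closure hz))

lemma bddAbove_range_perronFamily (hD : IsOpen D) (hbdd : Bornology.IsBounded D)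
    (hq : q ∈ perronFamily D q) {x : E} (hx : x ∈ closure D) :
    BddAbove (Set.range fun s : perronFamily D q => s.1 x) := by
  obtain ⟨B, hB⟩ := perronFamily_bddAbove hD hbdd hq
  exact ⟨B, by rintro _ ⟨s, rfl⟩; exact hB s s.2 x hx⟩

lemma le_perronSolution (hD : IsOpen D) (hbdd : Bornology.IsBounded D)
    (hq : q ∈ perronFamily D q) {s : E → ℝ} (hs : s ∈ perronFamily D q) {x : E}
    (hx : x ∈ closure D) : s x ≤ perronSolution D q x :=
  le_ciSup (bddAbove_range_perronFamily hD hbdd hq hx) ⟨s, hs⟩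

lemma lowerSemicontinuousOn_perronSolution (hD : IsOpen D) (hbdd : Bornology.IsBounded D)
    (hq : q ∈ perronFamily D q) : LowerSemicontinuousOn (perronSolution D q) (closure D) :=
  lowerSemicontinuousOn_ciSup (fun _ hx => bddAbove_range_perronFamily hD hbdd hq hx)
    fun s => s.2.1.lowerSemicontinuousOn

end Perron

section Poisson

open Filter Topology

variable {ι : Type*} [Fintype ι] [Nonempty ι] {D : Set (EuclideanSpace ℝ ι)}
  {q s : EuclideanSpace ℝ ι → ℝ}

lemma SubMeanOn.le_integral_sphereUniform (hs : ContinuousOn s D) (hmean : SubMeanOn s D)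
    {x : EuclideanSpace ℝ ι} {r : ℝ} (hr : 0 < r) (hball : closedBall x r ⊆ D) :
    s x ≤ ∫ z, s z ∂sphereUniform x r := by
  obtain ⟨h, hharmonic, hh, hsphere⟩ := exists_harmonicContOnCl_eqOn_sphere hr
    (hs.mono (sphere_subset_closedBall.trans hball))
  calc s x ≤ h x := (hmean.mono (ball_subset_closedBall.trans hball)).le_of_meanValueOn
        isOpen_ball isBounded_ball (hs.mono (closure_ball_subset_closedBall.trans hball))
        hharmonic.continuousOn (hh.mono ball_subset_closedBall)
        (by rw [frontier_ball x hr.ne']; exact fun z hz => (hsphere hz).ge)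
        (subset_closure (mem_ball_self hr))
    _ = ∫ z, h z ∂sphereUniform x r := (hh hr subset_rfl).2.symm
    _ = ∫ z, s z ∂sphereUniform x r :=
      integral_congr_ae ((ae_sphereUniform_mem_sphere x hr.le).mono hsphere)

lemma exists_poisson_modification (hD : IsOpen D) (hs : s ∈ perronFamily D q)
    {c : EuclideanSpace ℝ ι} {R : ℝ} (hR : 0 < R) (hball : closedBall c R ⊆ D) :
    ∃ s' ∈ perronFamily D q, s' c = ∫ z, s z ∂sphereUniform c R := by
  classical
  obtain ⟨hscont, hsmean, hsq⟩ := hs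
  have hballcl : closedBall c R ⊆ closure D := hball.trans subset_closure
  obtain ⟨h, hharmonic, hh, hsphere⟩ := exists_harmonicContOnCl_eqOn_sphere hR
    (hscont.mono (sphere_subset_closedBall.trans hballcl))
  have hsphere' : ∀ x ∈ frontier (ball c R), h x = s x := by rwa [frontier_ball c hR.ne']
  have hle : ∀ x ∈ closure (ball c R), s x ≤ h x := fun x hx =>
    (hsmean.mono (ball_subset_closedBall.trans hball)).le_of_meanValueOn isOpen_ball isBounded_ball
      (hscont.mono (closure_ball_subset_closedBall.trans hballcl)) hharmonic.continuousOn
      (hh.mono ball_subset_closedBall) (fun z hz => (hsphere' z hz).ge) hx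
  have hcont : ContinuousOn ((ball c R).piecewise h s) (closure D) :=
    .piecewise (fun x hx => hsphere' x hx.2) (hharmonic.continuousOn.mono Set.inter_subset_right)
      (hscont.mono Set.inter_subset_left)
  refine ⟨(ball c R).piecewise h s, ⟨hcont, ?_, fun x hx => ?_⟩, ?_⟩
  · exact hsmean.piecewise hD isOpen_ball (hscont.mono subset_closure) (hcont.mono subset_closure)
      ((hh.mono ball_subset_closedBall).subMeanOn isOpen_ball) fun x hx => hle x (subset_closure hx)
  · rw [Set.piecewise_eq_of_notMem _ _ _ fun hxc =>
      (hD.frontier_eq ▸ hx).2 (hball (ball_subset_closedBall hxc)), hsq hx]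
  · rw [Set.piecewise_eq_of_mem _ _ _ (mem_ball_self hR), ← (hh hR subset_rfl).2]
    exact integral_congr_ae ((ae_sphereUniform_mem_sphere c hR.le).mono hsphere)

lemma meanValueOn_perronSolution (hD : IsOpen D) (hbdd : Bornology.IsBounded D)
    (hq : q ∈ perronFamily D q) : MeanValueOn (perronSolution D q) D := by
  intro x r hr hball
  have hballcl := hball.trans subset_closure
  obtain ⟨B, hB⟩ := perronFamily_bddAbove hD hbdd hq
  obtain ⟨t, ht, htmono, htlim⟩ := exists_monotone_tendsto_ciSup ⟨q, hq⟩
    (supClosed_perronFamily hD) (fun s hs => hs.1)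
    (fun y hy => bddAbove_range_perronFamily hD hbdd hq hy)
  have hclosure : ∀ᵐ z ∂sphereUniform x r, z ∈ closure D := by
    filter_upwards [ae_sphereUniform_mem_sphere x hr.le] with z hz
    exact hballcl (sphere_subset_closedBall hz)
  have htint : ∀ n, Integrable (t n) (sphereUniform x r) := fun n =>
    integrable_sphereUniform hr.le ((ht n).1.mono (sphere_subset_closedBall.trans hballcl))
  have hint : Integrable (perronSolution D q) (sphereUniform x r) :=
    integrable_of_le_of_le
      (aestronglyMeasurable_of_tendsto_ae atTop (fun n => (htint n).aestronglyMeasurable)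
        (hclosure.mono htlim))
      (hclosure.mono fun _ hz => le_perronSolution hD hbdd hq (ht 0) hz)
      (hclosure.mono fun z hz => le_of_tendsto' (htlim z hz) fun n => hB (t n) (ht n) z hz)
      (htint 0) (integrable_const B)
  have hintlim : Tendsto (fun n => ∫ z, t n z ∂sphereUniform x r) atTop
      (𝓝 (∫ z, perronSolution D q z ∂sphereUniform x r)) :=
    integral_tendsto_of_tendsto_of_monotone htint hint
      (.of_forall fun z _ _ hij => htmono hij z) (hclosure.mono htlim)
  have hx := hballcl (mem_closedBall_self hr.le)
  refine ⟨hint, tendsto_nhds_unique hintlim (tendsto_of_tendsto_of_tendsto_of_le_of_le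
    (htlim x hx) tendsto_const_nhds (fun n => ?_) fun n => ?_)⟩
  · exact (ht n).2.1.le_integral_sphereUniform ((ht n).1.mono subset_closure) hr hball
  · obtain ⟨s, hs, hsx⟩ := exists_poisson_modification hD (ht n) hr hball
    exact hsx ▸ le_perronSolution hD hbdd hq hs hx

end Poisson

section OneRadius

variable {E : Type*} [NormedAddCommGroup E] [InnerProductSpace ℝ E] [MeasurableSpace E]
  [BorelSpace E]

/-- The one-radius mean value property: around each point of `D` there is at least one sphere,
bounding a closed ball inside `D`, over which the mean of `u` is its value at the centre. -/
def OneRadiusMeanValueOn (u : E → ℝ) (D : Set E) : Prop :=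
  ∀ x ∈ D, ∃ r > 0, closedBall x r ⊆ D ∧ ∫ z, u z ∂sphereUniform x r = u x

lemma OneRadiusMeanValueOn.neg {u : E → ℝ} {D : Set E} (hmean : OneRadiusMeanValueOn u D) :
    OneRadiusMeanValueOn (-u) D := fun x hx => by
  obtain ⟨r, hr, hball, hux⟩ := hmean x hx
  exact ⟨r, hr, hball, by simp [integral_neg, hux]⟩

variable {ι : Type*} [Fintype ι] [Nonempty ι] {D : Set (EuclideanSpace ℝ ι)}
  {u q₁ q₂ : EuclideanSpace ℝ ι → ℝ}

lemma OneRadiusMeanValueOn.perronSolution_le_add (hmean : OneRadiusMeanValueOn u D)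
    (hD : IsOpen D) (hbdd : Bornology.IsBounded D) (hu : ContinuousOn u (closure D))
    (hq₁ : q₁ ∈ perronFamily D q₁) (hq₂ : q₂ ∈ perronFamily D q₂) {ε : ℝ}
    (hfrontier : ∀ x ∈ frontier D, q₁ x ≤ q₂ x + u x + ε) {x : EuclideanSpace ℝ ι}
    (hx : x ∈ closure D) : perronSolution D q₁ x ≤ perronSolution D q₂ x + u x + ε := by
  have : Nonempty (perronFamily D q₁) := ⟨⟨q₁, hq₁⟩⟩
  refine ciSup_le fun ⟨s, hscont, hsmean, hsq⟩ => ?_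
  suffices s x - u x + -perronSolution D q₂ x ≤ ε by dsimp only; linarith
  refine le_of_le_on_frontier (w := fun z => s z - u z + -perronSolution D q₂ z) hbdd
    (.add (hscont.sub hu).upperSemicontinuousOn ?_) (fun y hy => ?_) (fun y hy => ?_) hx
  · exact continuous_neg.comp_lowerSemicontinuousOn_antitone
      (lowerSemicontinuousOn_perronSolution hD hbdd hq₂) fun _ _ => neg_le_neg
  · obtain ⟨r, hr, hball, huy⟩ := hmean y hy
    obtain ⟨hint, hperron⟩ := meanValueOn_perronSolution hD hbdd hq₂ hr hball
    have hsphere := sphere_subset_closedBall.trans (hball.trans subset_closure)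
    have hsint := integrable_sphereUniform hr.le (hscont.mono hsphere)
    have huint := integrable_sphereUniform hr.le (hu.mono hsphere)
    refine ⟨r, hr, hball, (hsint.sub huint).add hint.neg, ?_⟩
    simp only [← sub_eq_add_neg]
    rw [integral_sub (f := fun z => s z - u z) (hsint.sub huint) hint, integral_sub hsint huint,
      huy, hperron]
    linarith [hsmean.le_integral_sphereUniform (hscont.mono subset_closure) hr hball]
  · rw [hsq hy, perronSolution_eqOn_frontier hq₂ hy]
    linarith [hfrontier y hy]

lemma polyFun_mem_perronFamily (hD : IsOpen D) {p : MvPolynomial ι ℝ}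
    (hp : ∀ x ∈ D, 0 ≤ polyFun (polyLaplacian p) x) : polyFun p ∈ perronFamily D (polyFun p) :=
  ⟨(contDiff_polyFun p (n := 0)).continuous.continuousOn,
    subMeanOn_of_laplacian_nonneg (contDiff_polyFun p) hD
      (by simpa only [laplacian_polyFun] using hp),
    Set.eqOn_refl _ _⟩

lemma exists_mem_perronFamily_sub_eq_polyFun (hD : IsOpen D) (hbdd : Bornology.IsBounded D)
    (p : MvPolynomial ι ℝ) :
    ∃ q₁ q₂, q₁ ∈ perronFamily D q₁ ∧ q₂ ∈ perronFamily D q₂ ∧ q₁ - q₂ = polyFun p := by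
  obtain ⟨A, hA⟩ := hbdd.isCompact_closure.exists_bound_of_continuousOn
    (contDiff_polyFun (polyLaplacian p) (n := 0)).continuous.continuousOn
  have hbound : ∀ x ∈ D, 0 ≤ A ∧ -A ≤ polyFun (polyLaplacian p) x := fun x hx =>
    have hAx := hA x (subset_closure hx)
    ⟨(norm_nonneg _).trans hAx, neg_le_of_abs_le hAx⟩
  have hcard : (1 : ℝ) ≤ Fintype.card ι := Nat.one_le_cast.2 Fintype.card_pos
  have hq : ∀ x, polyFun (polyLaplacian (A • distSqPoly (0 : EuclideanSpace ℝ ι))) x =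
      A * (2 * Fintype.card ι) :=
    fun x => by rw [map_smul, map_smul, polyLaplacian_distSqPoly, polyFun_C]; simp
  refine ⟨polyFun (p + A • distSqPoly 0), polyFun (A • distSqPoly 0),
    polyFun_mem_perronFamily hD fun x hx => ?_, polyFun_mem_perronFamily hD fun x hx => ?_,
    by rw [map_add, add_sub_cancel_right]⟩
  · rw [map_add, map_add, Pi.add_apply, hq]
    nlinarith [hbound x hx]
  · rw [hq]
    exact mul_nonneg (hbound x hx).1 (by positivity)

lemma OneRadiusMeanValueOn.exists_meanValueOn_near (hmean : OneRadiusMeanValueOn u D)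
    (hD : IsOpen D) (hbdd : Bornology.IsBounded D) (hu : ContinuousOn u (closure D)) {ε : ℝ}
    (hε : 0 < ε) : ∃ g, MeanValueOn g D ∧ ∀ x ∈ D, |g x - u x| ≤ ε := by
  obtain ⟨p, hp⟩ := exists_polyFun_near hbdd.isCompact_closure hu hε
  obtain ⟨q₁, q₂, hq₁, hq₂, hq⟩ := exists_mem_perronFamily_sub_eq_polyFun hD hbdd p
  have hfrontier : ∀ x ∈ frontier D, |q₁ x - q₂ x - u x| < ε := fun x hx => by
    simpa only [← hq, Pi.sub_apply] using hp x (frontier_subset_closure hx)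
  refine ⟨perronSolution D q₁ - perronSolution D q₂, (meanValueOn_perronSolution hD hbdd hq₁).sub
    (meanValueOn_perronSolution hD hbdd hq₂), fun x hx => abs_le.2 ⟨?_, ?_⟩⟩
  · have := hmean.neg.perronSolution_le_add hD hbdd hu.neg hq₂ hq₁ (ε := ε) (fun z hz => by
      simp only [Pi.neg_apply]
      linarith [(abs_lt.1 (hfrontier z hz)).1]) (subset_closure hx)
    simp only [Pi.neg_apply, Pi.sub_apply] at this ⊢
    linarith
  · have := hmean.perronSolution_le_add hD hbdd hu hq₁ hq₂ (ε := ε) (fun z hz => by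
      linarith [(abs_lt.1 (hfrontier z hz)).2]) (subset_closure hx)
    simp only [Pi.sub_apply]
    linarith

lemma OneRadiusMeanValueOn.harmonicOnNhd (hmean : OneRadiusMeanValueOn u D)
    (hD : IsOpen D) (hbdd : Bornology.IsBounded D) (hu : ContinuousOn u (closure D)) :
    InnerProductSpace.HarmonicOnNhd u D :=
  have hcont := hu.mono subset_closure
  (meanValueOn_of_approx hcont fun _ => hmean.exists_meanValueOn_near hD hbdd hu).harmonicOnNhd
    hD hcont

end OneRadius

lemma laplacian_eq_of_contDiffAt {m : ℕ} {u : EuclideanSpace ℝ (Fin m) → ℝ}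
    {x : EuclideanSpace ℝ (Fin m)} (hu : ContDiffAt ℝ 2 u x) : laplacian m u x = Δ u x := by
  rw [laplacian_eq_sum_fderiv_fderiv_apply (EuclideanSpace.basisFun (Fin m) ℝ)
    ((hu.fderiv_right (m := 1) (by norm_num)).differentiableAt one_ne_zero)]
  simp only [laplacian, EuclideanSpace.basisFun_apply]

end Kellogg

theorem stmt_3_general (m : ℕ) [NeZero m] (D : Set (EuclideanSpace ℝ (Fin m)))
    (hD_open : IsOpen D) (hD_bdd : Bornology.IsBounded D)
    (u : EuclideanSpace ℝ (Fin m) → ℝ) (hu_cont : ContinuousOn u (closure D))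
    (hmean : ∀ x ∈ D, ∃ r > (0 : ℝ), closedBall x r ⊆ D ∧ sphereMean m u x r = u x) :
    ContDiffOn ℝ 2 u D ∧ ∀ x ∈ D, laplacian m u x = 0 := by
  have hmean' : Kellogg.OneRadiusMeanValueOn u D := by
    simpa only [Kellogg.OneRadiusMeanValueOn, Kellogg.sphereMean_eq_integral_sphereUniform]
      using hmean
  have hharmonic := hmean'.harmonicOnNhd hD_open hD_bdd hu_cont
  refine ⟨fun x hx => (hharmonic x hx).1.contDiffWithinAt, fun x hx => ?_⟩
  rw [Kellogg.laplacian_eq_of_contDiffAt (hharmonic x hx).1]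
  exact (hharmonic x hx).2.self_of_nhds

/-- Kellogg's theorem: if a continuous function on the closure of a bounded domain
equals its spherical mean over one admissible sphere centred at each point of the
domain, then it is harmonic. -/
theorem stmt_3 (m : ℕ) (hm : 2 ≤ m) (D : Set (EuclideanSpace ℝ (Fin m)))
    (hD_open : IsOpen D) (hD_conn : IsConnected D)
    (hD_bdd : Bornology.IsBounded D)
    (u : EuclideanSpace ℝ (Fin m) → ℝ)
    (hu_cont : ContinuousOn u (closure D))
    (hmean : ∀ x ∈ D, ∃ r > (0 : ℝ), closedBall x r ⊆ D ∧ sphereMean m u x r = u x) :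
    ContDiffOn ℝ 2 u D ∧ ∀ x ∈ D, laplacian m u x = 0 :=
  haveI : NeZero m := ⟨by omega⟩
  stmt_3_general m D hD_open hD_bdd u hu_cont hmean
end

section
/- (C. Neumann) Let D be a domain in ℝ³ and let u ∈ C²(D) satisfy the modified Helmholtz (Yukawa) equation ∇²u − μ²u = 0 in D for some μ ≠ 0. Then for every x ∈ D and every r > 0 such that the closed ball of radius r centred at x is contained in D, the spherical mean satisfies M(x, r, u) = (sinh(μr)/(μr)) · u(x). -/
open MeasureTheory Metric

/-!
Write `M s = ∫ u (x + s y) dν(y)`, where `ν` is a rotation-invariant probability measure on the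
unit sphere. For a skew-adjoint `A`, the integral `∫ g (exp (t A) y) dν(y)` does not depend on `t`,
and differentiating it twice at `t = 0` gives `∫ (D²g(y)(A y, A y) + Dg(y)(A² y)) dν = 0`. Summing
over the generators of the rotations in the coordinate planes yields
`∫ (Δg - D²g(y)(y, y) - (m - 1) Dg(y) y) dν = 0`, that is, the Laplace–Beltrami operator integrates
to zero over the sphere. For `g y = u (x + s y)` this is the Darboux equation
`s M'' + (m - 1) M' = s ∫ Δu (x + s y) dν`. When `m = 3` and `Δu = μ² u` it says `(s M)'' = μ² s M`,
and since `s M` vanishes at `0` with derivative `u x` there, `μ r M r = sinh (μ r) u x`.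
-/

open Module (finrank)

section ParametricIntegral

variable {E F : Type*} [NormedAddCommGroup E] [MeasurableSpace E] [OpensMeasurableSpace E]
  [NormedAddCommGroup F] {ν : Measure E} [IsFiniteMeasure ν] {K : Set E}

lemma integrable_of_continuousOn_of_ae_mem_isCompact (hK : IsCompact K) (hν : ∀ᵐ y ∂ν, y ∈ K)
    {g : E → F} (hg : ContinuousOn g K) : Integrable g ν := by
  rw [← Measure.restrict_eq_self_of_ae_mem hν]
  exact hg.integrableOn_of_subset_isCompact hK hK.measurableSet subset_rfl (measure_ne_top ν K)

lemma hasDerivAt_integral_of_continuousOn [NormedSpace ℝ F] (hK : IsCompact K)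
    (hν : ∀ᵐ y ∂ν, y ∈ K) {f f' : ℝ × E → F} {s δ : ℝ} (hδ : 0 < δ)
    (hf : ContinuousOn f (closedBall s δ ×ˢ K)) (hf' : ContinuousOn f' (closedBall s δ ×ˢ K))
    (hderiv : ∀ t ∈ closedBall s δ, ∀ y ∈ K, HasDerivAt (fun t => f (t, y)) (f' (t, y)) t) :
    HasDerivAt (fun t => ∫ y, f (t, y) ∂ν) (∫ y, f' (s, y) ∂ν) s := by
  have hs : s ∈ closedBall s δ := mem_closedBall_self hδ.le
  have integrable_slice {g : ℝ × E → F} (hg : ContinuousOn g (closedBall s δ ×ˢ K)) {t : ℝ}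
      (ht : t ∈ closedBall s δ) : Integrable (fun y => g (t, y)) ν :=
    integrable_of_continuousOn_of_ae_mem_isCompact hK hν
      (hg.comp (f := fun y => (t, y)) (by fun_prop) fun y hy => ⟨ht, hy⟩)
  obtain ⟨C, hC⟩ := ((isCompact_closedBall s δ).prod hK).exists_bound_of_continuousOn hf'
  refine (hasDerivAt_integral_of_dominated_loc_of_deriv_le (F := fun t y => f (t, y))
    (F' := fun t y => f' (t, y)) (bound := fun _ => C) (closedBall_mem_nhds s hδ) ?_
    (integrable_slice hf hs) (integrable_slice hf' hs).aestronglyMeasurable ?_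
    (integrable_const C) ?_).2
  · filter_upwards [closedBall_mem_nhds s hδ] with t ht
    exact (integrable_slice hf ht).aestronglyMeasurable
  · filter_upwards [hν] with y hy t ht using hC (t, y) ⟨ht, hy⟩
  · filter_upwards [hν] with y hy t ht using hderiv t ht y hy

lemma hasDerivAt_integral_of_contDiffOn [NormedSpace ℝ E] [NormedSpace ℝ F] (hK : IsCompact K)
    (hν : ∀ᵐ y ∂ν, y ∈ K) {f : ℝ × E → F} {W : Set (ℝ × E)} (hW : IsOpen W)
    (hf : ContDiffOn ℝ 1 f W) {s : ℝ} (hs : ∀ y ∈ K, (s, y) ∈ W) {f' : E → F}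
    (hf' : ∀ y ∈ K, HasDerivAt (fun t => f (t, y)) (f' y) s) :
    HasDerivAt (fun t => ∫ y, f (t, y) ∂ν) (∫ y, f' y ∂ν) s := by
  obtain ⟨U, V, hU, -, hsU, hKV, hUV⟩ := generalized_tube_lemma (isCompact_singleton (x := s)) hK hW
    (by rintro ⟨t, y⟩ ⟨rfl, hy⟩; exact hs y hy)
  obtain ⟨δ, hδ, hδU⟩ := nhds_basis_closedBall.mem_iff.1 (hU.mem_nhds (hsU rfl))
  have hδW : closedBall s δ ×ˢ K ⊆ W := (Set.prod_mono hδU hKV).trans hUV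
  have hderiv : ∀ t ∈ closedBall s δ, ∀ y ∈ K,
      HasDerivAt (fun t => f (t, y)) (fderiv ℝ f (t, y) (1, 0)) t := fun t ht y hy =>
    ((hf.differentiableOn one_ne_zero).differentiableAt
      (hW.mem_nhds (hδW ⟨ht, hy⟩))).hasFDerivAt.comp_hasDerivAt t
      ((hasDerivAt_id t).prodMk (hasDerivAt_const t y))
  have hcont : ContinuousOn (fun p => fderiv ℝ f p (1, 0)) W :=
    (hf.continuousOn_fderiv_of_isOpen hW le_rfl).clm_apply continuousOn_const
  have integral_deriv : ∫ y, fderiv ℝ f (s, y) (1, 0) ∂ν = ∫ y, f' y ∂ν :=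
    integral_congr_ae (hν.mono fun y hy =>
      (hderiv s (mem_closedBall_self hδ.le) y hy).unique (hf' y hy))
  rw [← integral_deriv]
  exact hasDerivAt_integral_of_continuousOn hK hν hδ (hf.continuousOn.mono hδW) (hcont.mono hδW)
    hderiv

end ParametricIntegral

section Rotations

open scoped InnerProductSpace

variable {E : Type*} [NormedAddCommGroup E] [InnerProductSpace ℝ E]

/-- The infinitesimal rotation `y ↦ ⟪a, y⟫ b - ⟪b, y⟫ a` in the plane spanned by `a` and `b`. -/
noncomputable def rotationGenerator (a b : E) : E →L[ℝ] E :=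
  InnerProductSpace.rankOne ℝ b a - InnerProductSpace.rankOne ℝ a b

lemma rotationGenerator_apply (a b y : E) :
    rotationGenerator a b y = ⟪a, y⟫_ℝ • b - ⟪b, y⟫_ℝ • a := rfl

lemma rotationGenerator_mem_skewAdjoint [CompleteSpace E] (a b : E) :
    rotationGenerator a b ∈ skewAdjoint (E →L[ℝ] E) := by
  simp [skewAdjoint.mem_iff, rotationGenerator, ContinuousLinearMap.star_eq_adjoint]

open NormedSpace in
lemma exp_smul_mem_unitary [CompleteSpace E] {A : E →L[ℝ] E} (hA : A ∈ skewAdjoint (E →L[ℝ] E))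
    (t : ℝ) : exp (t • A) ∈ unitary (E →L[ℝ] E) := by
  let : NormedAlgebra ℚ (E →L[ℝ] E) := .restrictScalars ℚ ℝ _
  exact exp_mem_unitary_of_mem_skewAdjoint (skewAdjoint.smul_mem t hA)

variable {ι : Type*} [Fintype ι]

lemma sum_rotationGenerator_rotationGenerator (b : OrthonormalBasis ι ℝ E) (y : E) :
    ∑ i, ∑ j, rotationGenerator (b i) (b j) (rotationGenerator (b i) (b j) y) =
      (-2 * ((finrank ℝ E : ℝ) - 1)) • y := by
  classical
  have hy : ∑ i, ⟪b i, y⟫_ℝ • b i = y := b.sum_repr' y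
  have hterm (i j : ι) : rotationGenerator (b i) (b j) (rotationGenerator (b i) (b j) y) =
      (if i = j then (2 : ℝ) • ⟪b i, y⟫_ℝ • b i else 0) - ⟪b i, y⟫_ℝ • b i - ⟪b j, y⟫_ℝ • b j := by
    rcases eq_or_ne i j with rfl | hij
    · simp only [rotationGenerator_apply, sub_self, inner_zero_right, if_true]
      module
    · simp only [rotationGenerator_apply, inner_sub_right, inner_smul_right, b.inner_eq_ite, hij,
        hij.symm, if_true, if_false]
      module
  have sum_const : ∑ _j : ι, y = (Fintype.card ι : ℝ) • y := by
    rw [Finset.sum_const, Finset.card_univ, Nat.cast_smul_eq_nsmul]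
  have sum_outer : ∑ i, ∑ _j : ι, ⟪b i, y⟫_ℝ • b i = (Fintype.card ι : ℝ) • y := by
    rw [Finset.sum_comm, hy, sum_const]
  simp only [hterm, Finset.sum_sub_distrib, Finset.sum_ite_eq, Finset.mem_univ, if_true, sum_outer,
    hy, sum_const, Module.finrank_eq_card_basis b.toBasis]
  rw [← Finset.smul_sum, hy]
  module

lemma sum_bilinear_rotationGenerator {F : Type*} [NormedAddCommGroup F] [NormedSpace ℝ F]
    (b : OrthonormalBasis ι ℝ E) (B : E →L[ℝ] E →L[ℝ] F) (y : E) :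
    ∑ i, ∑ j, B (rotationGenerator (b i) (b j) y) (rotationGenerator (b i) (b j) y) =
      (2 : ℝ) • (‖y‖ ^ 2 • ∑ i, B (b i) (b i) - B y y) := by
  have hnorm : ∑ i, ⟪b i, y⟫_ℝ ^ 2 = ‖y‖ ^ 2 := by simpa using b.sum_sq_norm_inner_right y
  have hB : ∑ i, ∑ j, (⟪b j, y⟫_ℝ * ⟪b i, y⟫_ℝ) • B (b j) (b i) = B y y := by
    conv_rhs => rw [← b.sum_repr' y]
    simp only [map_sum, map_smul, sum_apply, smul_apply, Finset.smul_sum, smul_smul, mul_comm]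
  have hB_swap : ∑ i, ∑ j, (⟪b i, y⟫_ℝ * ⟪b j, y⟫_ℝ) • B (b i) (b j) = B y y := by
    rw [Finset.sum_comm, hB]
  have hterm (i j : ι) :
      B (rotationGenerator (b i) (b j) y) (rotationGenerator (b i) (b j) y) =
        ⟪b i, y⟫_ℝ ^ 2 • B (b j) (b j) + ⟪b j, y⟫_ℝ ^ 2 • B (b i) (b i) -
          (⟪b i, y⟫_ℝ * ⟪b j, y⟫_ℝ) • B (b i) (b j) -
          (⟪b j, y⟫_ℝ * ⟪b i, y⟫_ℝ) • B (b j) (b i) := by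
    simp only [rotationGenerator_apply, map_sub, map_smul, sub_apply, smul_apply]
    module
  simp only [hterm, Finset.sum_sub_distrib, Finset.sum_add_distrib, ← Finset.smul_sum,
    ← Finset.sum_smul, hnorm, hB, hB_swap]
  module

end Rotations

section SecondDerivative

open scoped Laplacian

variable {E F : Type*} [NormedAddCommGroup E] [NormedAddCommGroup F] [NormedSpace ℝ F]

section NormedSpace

variable [NormedSpace ℝ E]

lemma hasDerivAt_add_smul (x y : E) (s : ℝ) : HasDerivAt (fun t : ℝ => x + t • y) y s := by
  simpa using ((hasDerivAt_id s).smul_const y).const_add x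

lemma differentiableAt_fderiv_of_contDiffOn {D : Set E} (hD : IsOpen D) {u : E → F}
    (hu : ContDiffOn ℝ 2 u D) {y : E} (hy : y ∈ D) : DifferentiableAt ℝ (fderiv ℝ u) y :=
  ((hu.fderiv_of_isOpen hD (m := 1) le_rfl).differentiableOn one_ne_zero).differentiableAt
    (hD.mem_nhds hy)

lemma continuousOn_fderiv_fderiv_of_contDiffOn {D : Set E} (hD : IsOpen D) {u : E → F}
    (hu : ContDiffOn ℝ 2 u D) : ContinuousOn (fderiv ℝ (fderiv ℝ u)) D :=
  (hu.fderiv_of_isOpen hD (m := 1) le_rfl).continuousOn_fderiv_of_isOpen hD le_rfl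

lemma fderiv_comp_add_smul (u : E → F) (x : E) (s : ℝ) :
    fderiv ℝ (fun y => u (x + s • y)) = fun y => s • fderiv ℝ u (x + s • y) := by
  ext1 y
  rw [fderiv_comp_smul (f := fun z => u (x + z)), fderiv_comp_add_left]

lemma fderiv_fderiv_comp_add_smul (u : E → F) (x : E) (s : ℝ) :
    fderiv ℝ (fderiv ℝ fun y => u (x + s • y)) =
      fun y => s ^ 2 • fderiv ℝ (fderiv ℝ u) (x + s • y) := by
  have hsmul : fderiv ℝ (fun y => s • fderiv ℝ u (x + s • y)) =
      fun y => s • fderiv ℝ (fun y => fderiv ℝ u (x + s • y)) y := by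
    ext1 y
    exact congrFun (fderiv_const_smul_field (𝕜 := ℝ) (f := fun y => fderiv ℝ u (x + s • y)) s) y
  simp only [fderiv_comp_add_smul u, hsmul, fderiv_comp_add_smul (fderiv ℝ u), sq, mul_smul]

end NormedSpace

variable [InnerProductSpace ℝ E] [FiniteDimensional ℝ E]

lemma laplacian_eq_sum_fderiv_fderiv {ι : Type*} [Fintype ι] (b : OrthonormalBasis ι ℝ E)
    (u : E → F) (x : E) : Δ u x = ∑ i, fderiv ℝ (fderiv ℝ u) x (b i) (b i) := by
  simp [InnerProductSpace.laplacian_eq_iteratedFDeriv_orthonormalBasis u b,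
    iteratedFDeriv_two_apply]

lemma laplacian_comp_add_smul (u : E → F) (x : E) (s : ℝ) (y : E) :
    Δ (fun y => u (x + s • y)) y = s ^ 2 • Δ u (x + s • y) := by
  simp only [laplacian_eq_sum_fderiv_fderiv (stdOrthonormalBasis ℝ E), fderiv_fderiv_comp_add_smul,
    smul_apply, Finset.smul_sum]

lemma continuousOn_laplacian_of_contDiffOn {D : Set E} (hD : IsOpen D) {u : E → F}
    (hu : ContDiffOn ℝ 2 u D) : ContinuousOn (Δ u) D := by
  have hDDu := continuousOn_fderiv_fderiv_of_contDiffOn hD hu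
  simp only [funext (laplacian_eq_sum_fderiv_fderiv (stdOrthonormalBasis ℝ E) u)]
  fun_prop

lemma sum_fderiv_rotationGenerator {ι : Type*} [Fintype ι] (b : OrthonormalBasis ι ℝ E)
    (g : E → F) {y : E} (hy : ‖y‖ = 1) :
    ∑ i, ∑ j, (fderiv ℝ (fderiv ℝ g) y (rotationGenerator (b i) (b j) y)
          (rotationGenerator (b i) (b j) y) +
        fderiv ℝ g y (rotationGenerator (b i) (b j) (rotationGenerator (b i) (b j) y))) =
      (2 : ℝ) • (Δ g y -
        (fderiv ℝ (fderiv ℝ g) y y y + ((finrank ℝ E : ℝ) - 1) • fderiv ℝ g y y)) := by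
  simp only [Finset.sum_add_distrib, ← map_sum, sum_bilinear_rotationGenerator, hy,
    sum_rotationGenerator_rotationGenerator, map_smul, laplacian_eq_sum_fderiv_fderiv b]
  module

end SecondDerivative

/-- A probability measure which is concentrated on the unit sphere of `E` and invariant under all
linear isometries of `E`. It plays the role of the normalized surface measure, without reference to
any construction of the latter. -/
class IsUniformOnUnitSphere {E : Type*} [NormedAddCommGroup E] [NormedSpace ℝ E]
    [MeasurableSpace E] (ν : Measure E) : Prop extends IsProbabilityMeasure ν where
  measurePreserving (e : E ≃ₗᵢ[ℝ] E) : MeasurePreserving e ν ν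
  ae_mem_sphere : ∀ᵐ y ∂ν, y ∈ sphere (0 : E) 1

namespace IsUniformOnUnitSphere

variable {E F : Type*} [NormedAddCommGroup E] [MeasurableSpace E] [BorelSpace E]
  [NormedAddCommGroup F]

section NormedSpace

variable [NormedSpace ℝ E] {ν : Measure E} [IsUniformOnUnitSphere ν]

lemma integral_comp_linearIsometryEquiv [NormedSpace ℝ F] (e : E ≃ₗᵢ[ℝ] E) (g : E → F) :
    ∫ y, g (e y) ∂ν = ∫ y, g y ∂ν :=
  (measurePreserving (ν := ν) e).integral_comp e.toHomeomorph.measurableEmbedding g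

lemma integral_continuousLinearMap_eq_zero [NormedSpace ℝ F] (ℓ : E →L[ℝ] F) :
    ∫ y, ℓ y ∂ν = 0 := by
  have h := integral_comp_linearIsometryEquiv (ν := ν) (LinearIsometryEquiv.neg ℝ) ℓ
  simp only [LinearIsometryEquiv.coe_neg, map_neg, integral_neg] at h
  have := IsAddTorsionFree.of_isTorsionFree ℝ F
  exact neg_eq_self.1 h

lemma integrable_of_continuousOn [FiniteDimensional ℝ E] {g : E → F}
    (hg : ContinuousOn g (sphere 0 1)) : Integrable g ν :=
  have := FiniteDimensional.proper_real E
  integrable_of_continuousOn_of_ae_mem_isCompact (isCompact_sphere 0 1) ae_mem_sphere hg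

end NormedSpace

variable [InnerProductSpace ℝ E] [FiniteDimensional ℝ E] [NormedSpace ℝ F]
  {ν : Measure E} [IsUniformOnUnitSphere ν] {D : Set E}

open NormedSpace in
lemma integral_fderiv_apply_skewAdjoint (hD : IsOpen D) (hS : sphere 0 1 ⊆ D) {g : E → F}
    (hg : ContDiffOn ℝ 1 g D) {A : E →L[ℝ] E} (hA : A ∈ skewAdjoint (E →L[ℝ] E)) :
    ∫ y, fderiv ℝ g y (A y) ∂ν = 0 := by
  have hexp : ContDiff ℝ 1 fun p : ℝ × E => exp (p.1 • A) p.2 := by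
    have : ContDiff ℝ 1 (exp : (E →L[ℝ] E) → E →L[ℝ] E) :=
      contDiff_iff_contDiffAt.2 fun B => (exp_analytic B).contDiffAt
    exact (this.comp (contDiff_fst.smul contDiff_const)).clm_apply contDiff_snd
  have hderiv :
      HasDerivAt (fun t : ℝ => ∫ y, g (exp (t • A) y) ∂ν) (∫ y, fderiv ℝ g y (A y) ∂ν) 0 := by
    refine hasDerivAt_integral_of_contDiffOn (f := fun p => g (exp (p.1 • A) p.2))
      (isCompact_sphere 0 1) ae_mem_sphere (hD.preimage hexp.continuous)
      (hg.comp hexp.contDiffOn fun _ hp => hp) (fun y hy => ?_) fun y hy => ?_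
    · simpa using hS hy
    · have hg_y : HasFDerivAt g (fderiv ℝ g y) (exp ((0 : ℝ) • A) y) := by
        simpa using ((hg.differentiableOn one_ne_zero).differentiableAt
          (hD.mem_nhds (hS hy))).hasFDerivAt
      have hexp_y : HasDerivAt (fun t : ℝ => exp (t • A) y) (A y) 0 := by
        simpa using (hasDerivAt_exp_smul_const A (0 : ℝ)).clm_apply (hasDerivAt_const 0 y)
      exact hg_y.comp_hasDerivAt 0 hexp_y
  have hconst (t : ℝ) : ∫ y, g (exp (t • A) y) ∂ν = ∫ y, g y ∂ν :=
    integral_comp_linearIsometryEquiv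
      (Unitary.linearIsometryEquiv ⟨exp (t • A), exp_smul_mem_unitary hA t⟩) g
  simp only [hconst] at hderiv
  exact hderiv.unique (hasDerivAt_const 0 _)

lemma integral_fderiv_fderiv_apply_skewAdjoint (hD : IsOpen D) (hS : sphere 0 1 ⊆ D) {g : E → F}
    (hg : ContDiffOn ℝ 2 g D) {A : E →L[ℝ] E} (hA : A ∈ skewAdjoint (E →L[ℝ] E)) :
    ∫ y, (fderiv ℝ (fderiv ℝ g) y (A y) (A y) + fderiv ℝ g y (A (A y))) ∂ν = 0 := by
  have hDg : ContDiffOn ℝ 1 (fderiv ℝ g) D := hg.fderiv_of_isOpen hD le_rfl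
  rw [← integral_fderiv_apply_skewAdjoint (ν := ν) hD hS (hDg.clm_apply A.contDiff.contDiffOn) hA]
  refine integral_congr_ae ((ae_mem_sphere (ν := ν)).mono fun y hy => ?_)
  have hderiv := (differentiableAt_fderiv_of_contDiffOn hD hg (hS hy)).hasFDerivAt.clm_apply
    A.hasFDerivAt
  simp [hderiv.fderiv, add_comm]

open scoped Laplacian

lemma integral_laplacian_sub_radial (hD : IsOpen D) (hS : sphere 0 1 ⊆ D) {g : E → F}
    (hg : ContDiffOn ℝ 2 g D) :
    ∫ y, (Δ g y - (fderiv ℝ (fderiv ℝ g) y y y +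
      ((finrank ℝ E : ℝ) - 1) • fderiv ℝ g y y)) ∂ν = 0 := by
  let b := stdOrthonormalBasis ℝ E
  let J (i j) := rotationGenerator (b i) (b j)
  have hDg : ContinuousOn (fderiv ℝ g) D := hg.continuousOn_fderiv_of_isOpen hD one_le_two
  have hDDg := continuousOn_fderiv_fderiv_of_contDiffOn hD hg
  have hint (i j) : Integrable (fun y => fderiv ℝ (fderiv ℝ g) y (J i j y) (J i j y) +
      fderiv ℝ g y (J i j (J i j y))) ν := by
    have hJ : Continuous (J i j) := (J i j).continuous
    exact integrable_of_continuousOn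
      ((((hDDg.mono hS).clm_apply hJ.continuousOn).clm_apply hJ.continuousOn).add
        ((hDg.mono hS).clm_apply (hJ.comp hJ).continuousOn))
  refine (smul_eq_zero_iff_right (two_ne_zero (α := ℝ))).1 ?_
  calc (2 : ℝ) • ∫ y, (Δ g y - (fderiv ℝ (fderiv ℝ g) y y y +
        ((finrank ℝ E : ℝ) - 1) • fderiv ℝ g y y)) ∂ν
      = ∫ y, ∑ i, ∑ j, (fderiv ℝ (fderiv ℝ g) y (J i j y) (J i j y) +
          fderiv ℝ g y (J i j (J i j y))) ∂ν := by
        rw [← integral_smul]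
        exact integral_congr_ae ((ae_mem_sphere (ν := ν)).mono fun y hy =>
          (sum_fderiv_rotationGenerator b g (mem_sphere_zero_iff_norm.1 hy)).symm)
    _ = ∑ i, ∑ j, ∫ y, (fderiv ℝ (fderiv ℝ g) y (J i j y) (J i j y) +
          fderiv ℝ g y (J i j (J i j y))) ∂ν := by
        rw [integral_finsetSum _ fun i _ => integrable_finsetSum _ fun j _ => hint i j]
        simp only [integral_finsetSum _ fun j _ => hint _ j]
    _ = 0 := by
        simp only [J, integral_fderiv_fderiv_apply_skewAdjoint hD hS hg
          (rotationGenerator_mem_skewAdjoint _ _), Finset.sum_const_zero]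

variable {x : E} {s : ℝ} {u : E → F}

lemma hasDerivAt_integral_add_smul (hD : IsOpen D) (hu : ContDiffOn ℝ 1 u D)
    (hs : ∀ y ∈ sphere (0 : E) 1, x + s • y ∈ D) :
    HasDerivAt (fun t : ℝ => ∫ y, u (x + t • y) ∂ν) (∫ y, fderiv ℝ u (x + s • y) y ∂ν) s := by
  have hray : ContDiff ℝ 1 fun p : ℝ × E => x + p.1 • p.2 := by fun_prop
  refine hasDerivAt_integral_of_contDiffOn (f := fun p => u (x + p.1 • p.2)) (isCompact_sphere 0 1)
    ae_mem_sphere (hD.preimage hray.continuous) (hu.comp hray.contDiffOn fun _ hp => hp) hs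
    fun y hy => ?_
  exact ((hu.differentiableOn one_ne_zero).differentiableAt
    (hD.mem_nhds (hs y hy))).hasFDerivAt.comp_hasDerivAt s (hasDerivAt_add_smul x y s)

lemma hasDerivAt_integral_fderiv_add_smul (hD : IsOpen D) (hu : ContDiffOn ℝ 2 u D)
    (hs : ∀ y ∈ sphere (0 : E) 1, x + s • y ∈ D) :
    HasDerivAt (fun t : ℝ => ∫ y, fderiv ℝ u (x + t • y) y ∂ν)
      (∫ y, fderiv ℝ (fderiv ℝ u) (x + s • y) y y ∂ν) s := by
  have hray : ContDiff ℝ 1 fun p : ℝ × E => x + p.1 • p.2 := by fun_prop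
  have hDu : ContDiffOn ℝ 1 (fderiv ℝ u) D := hu.fderiv_of_isOpen hD le_rfl
  have hDu_ray : ContDiffOn ℝ 1 (fun p : ℝ × E => fderiv ℝ u (x + p.1 • p.2))
      ((fun p : ℝ × E => x + p.1 • p.2) ⁻¹' D) := hDu.comp hray.contDiffOn fun _ hp => hp
  refine hasDerivAt_integral_of_contDiffOn (f := fun p => fderiv ℝ u (x + p.1 • p.2) p.2)
    (isCompact_sphere 0 1) ae_mem_sphere (hD.preimage hray.continuous)
    (hDu_ray.clm_apply contDiffOn_snd) hs fun y hy => ?_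
  have hderiv : HasDerivAt (fun t : ℝ => fderiv ℝ u (x + t • y))
      (fderiv ℝ (fderiv ℝ u) (x + s • y) y) s :=
    (differentiableAt_fderiv_of_contDiffOn hD hu (hs y hy)).hasFDerivAt.comp_hasDerivAt s
      (hasDerivAt_add_smul x y s)
  simpa using hderiv.clm_apply (hasDerivAt_const s y)

lemma darboux_equation (hD : IsOpen D) (hu : ContDiffOn ℝ 2 u D)
    (hs : ∀ y ∈ sphere (0 : E) 1, x + s • y ∈ D) :
    s • ∫ y, fderiv ℝ (fderiv ℝ u) (x + s • y) y y ∂ν +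
        ((finrank ℝ E : ℝ) - 1) • ∫ y, fderiv ℝ u (x + s • y) y ∂ν =
      s • ∫ y, Δ u (x + s • y) ∂ν := by
  rcases eq_or_ne s 0 with rfl | hs0
  · -- At the centre `Du(x)` is linear in `y`, so it integrates to zero by antipodal symmetry.
    simp [integral_continuousLinearMap_eq_zero]
  have hray : ContDiff ℝ 2 fun y : E => x + s • y := by fun_prop
  have continuousOn_ray : ContinuousOn (fun y : E => x + s • y) (sphere 0 1) :=
    hray.continuous.continuousOn
  have hDu : ContinuousOn (fderiv ℝ u) D := hu.continuousOn_fderiv_of_isOpen hD one_le_two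
  have integrable_laplacian : Integrable (fun y => Δ u (x + s • y)) ν :=
    integrable_of_continuousOn
      ((continuousOn_laplacian_of_contDiffOn hD hu).comp continuousOn_ray hs)
  have integrable_fderiv : Integrable (fun y => fderiv ℝ u (x + s • y) y) ν :=
    integrable_of_continuousOn ((hDu.comp continuousOn_ray hs).clm_apply continuousOn_id)
  have integrable_fderiv_fderiv :
      Integrable (fun y => fderiv ℝ (fderiv ℝ u) (x + s • y) y y) ν :=
    integrable_of_continuousOn
      ((((continuousOn_fderiv_fderiv_of_contDiffOn hD hu).comp continuousOn_ray hs).clm_apply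
        continuousOn_id).clm_apply continuousOn_id)
  have key := integral_laplacian_sub_radial (ν := ν) (hD.preimage hray.continuous) hs
    (hu.comp hray.contDiffOn fun _ hy => hy)
  simp only [Function.comp_def, laplacian_comp_add_smul, fderiv_fderiv_comp_add_smul] at key
  simp only [fderiv_comp_add_smul, smul_apply] at key
  refine (smul_right_injective F hs0 (sub_eq_zero.1 ?_)).symm
  rw [← key, integral_sub, integral_add, integral_smul, integral_smul, integral_smul, integral_smul]
  · module
  all_goals fun_prop

end IsUniformOnUnitSphere

section HausdorffSphere

open scoped InnerProductSpace

variable {E : Type*} [NormedAddCommGroup E] [InnerProductSpace ℝ E]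

lemma norm_stereoToFun_le_two {v x : E} (hx : ‖x‖ = 1) (hvx : ⟪v, x⟫_ℝ ≤ 0) :
    ‖stereoToFun v x‖ ≤ 2 := by
  calc ‖stereoToFun v x‖
      = 2 / (1 - ⟪v, x⟫_ℝ) * ‖(ℝ ∙ v)ᗮ.orthogonalProjectionOnto x‖ := by
        rw [stereoToFun_apply, norm_smul, innerSL_apply_apply, Real.norm_of_nonneg (by bound)]
    _ ≤ 2 * 1 := by
        gcongr
        · exact div_le_self zero_le_two (by linarith)
        · exact ((ℝ ∙ v)ᗮ.norm_orthogonalProjectionOnto_apply_le x).trans_eq hx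
    _ = 2 := mul_one 2

lemma hemisphere_subset_image_stereoInvFunAux {v : E} (hv : ‖v‖ = 1) :
    {x ∈ sphere (0 : E) 1 | ⟪v, x⟫_ℝ ≤ 0} ⊆
      (fun w : (ℝ ∙ v)ᗮ => stereoInvFunAux v w) '' closedBall 0 2 := by
  rintro x ⟨hx, hvx⟩
  have hne : x ≠ v := by
    rintro rfl
    rw [real_inner_self_eq_norm_sq, hv, one_pow] at hvx
    exact hvx.not_gt one_pos
  refine ⟨stereoToFun v x, ?_, ?_⟩
  · rw [mem_closedBall_zero_iff]
    exact norm_stereoToFun_le_two (mem_sphere_zero_iff_norm.1 hx) hvx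
  · exact congrArg Subtype.val (stereo_left_inv hv (x := ⟨x, hx⟩) hne)

lemma ball_subset_image_orthogonalProjectionOnto_sphere {v : E} (hv : ‖v‖ = 1) :
    ball 0 1 ⊆ (ℝ ∙ v)ᗮ.orthogonalProjectionOnto '' sphere (0 : E) 1 := by
  intro w hw
  have hw1 : ‖w‖ ^ 2 ≤ 1 := pow_le_one₀ (norm_nonneg w) (mem_ball_zero_iff.1 hw).le
  have horth : ⟪(w : E), √(1 - ‖w‖ ^ 2) • v⟫_ℝ = 0 := by
    rw [inner_smul_right, Submodule.mem_orthogonal_singleton_iff_inner_left.1 w.2, mul_zero]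
  refine ⟨w + √(1 - ‖w‖ ^ 2) • v, ?_, ?_⟩
  · rw [mem_sphere_zero_iff_norm, ← sq_eq_sq₀ (norm_nonneg _) zero_le_one, sq,
      norm_add_sq_eq_norm_sq_add_norm_sq_real horth, norm_smul, hv, ← Submodule.coe_norm,
      Real.norm_of_nonneg (Real.sqrt_nonneg _), mul_one, Real.mul_self_sqrt (by linarith)]
    ring
  · simp [Submodule.orthogonalProjectionOnto_orthogonalComplement_singleton_eq_zero]

variable [MeasurableSpace E] [BorelSpace E] {n : ℕ} [Fact (finrank ℝ E = n + 1)]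

lemma isAddHaarMeasure_hausdorffMeasure_orthogonal_singleton {v : E} (hv : v ≠ 0) :
    (μH[n] : Measure (ℝ ∙ v)ᗮ).IsAddHaarMeasure := by
  have : FiniteDimensional ℝ E := .of_fact_finrank_eq_succ n
  rw [← Submodule.finrank_orthogonal_span_singleton (𝕜 := ℝ) (n := n) hv]
  infer_instance

-- Stereographic projection from the pole `v` maps the opposite hemisphere into a bounded set, on
-- which its inverse is Lipschitz.
lemma hausdorffMeasure_hemisphere_lt_top {v : E} (hv : ‖v‖ = 1) :
    μH[n] {x ∈ sphere (0 : E) 1 | ⟪v, x⟫_ℝ ≤ 0} < ⊤ := by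
  have : FiniteDimensional ℝ E := .of_fact_finrank_eq_succ n
  have hv0 : v ≠ 0 := by rintro rfl; simp at hv
  have := isAddHaarMeasure_hausdorffMeasure_orthogonal_singleton (n := n) hv0
  have hsmooth : ContDiff ℝ 1 (fun w : (ℝ ∙ v)ᗮ => stereoInvFunAux v w) :=
    contDiff_stereoInvFunAux.comp (ℝ ∙ v)ᗮ.subtypeL.contDiff
  obtain ⟨L, hL⟩ := hsmooth.contDiffOn.exists_lipschitzOnWith one_ne_zero
    (convex_closedBall 0 2) (isCompact_closedBall 0 2)
  calc μH[n] {x ∈ sphere (0 : E) 1 | ⟪v, x⟫_ℝ ≤ 0}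
      ≤ μH[n] ((fun w : (ℝ ∙ v)ᗮ => stereoInvFunAux v w) '' closedBall 0 2) :=
        measure_mono (hemisphere_subset_image_stereoInvFunAux hv)
    _ ≤ L ^ (n : ℝ) * μH[n] (closedBall (0 : (ℝ ∙ v)ᗮ) 2) :=
        hL.hausdorffMeasure_image_le n.cast_nonneg
    _ < ⊤ := ENNReal.mul_lt_top (ENNReal.rpow_lt_top_of_nonneg n.cast_nonneg ENNReal.coe_ne_top)
        measure_closedBall_lt_top

variable (E)

lemma hausdorffMeasure_unitSphere_ne_top : μH[n] (sphere (0 : E) 1) ≠ ⊤ := by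
  have : Nontrivial E := Module.nontrivial_of_finrank_eq_succ (R := ℝ) (n := n) Fact.out
  obtain ⟨v, hv⟩ := exists_norm_eq E zero_le_one
  have hcover : sphere (0 : E) 1 ⊆
      {x ∈ sphere (0 : E) 1 | ⟪v, x⟫_ℝ ≤ 0} ∪ {x ∈ sphere (0 : E) 1 | ⟪-v, x⟫_ℝ ≤ 0} := fun x hx =>
    (le_total ⟪v, x⟫_ℝ 0).imp (fun h => ⟨hx, h⟩) (fun h => ⟨hx, by simpa [inner_neg_left] using h⟩)
  exact (measure_mono hcover).trans_lt (measure_union_lt_top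
    (hausdorffMeasure_hemisphere_lt_top hv)
    (hausdorffMeasure_hemisphere_lt_top ((norm_neg v).trans hv))) |>.ne

lemma hausdorffMeasure_unitSphere_ne_zero : μH[n] (sphere (0 : E) 1) ≠ 0 := by
  have : FiniteDimensional ℝ E := .of_fact_finrank_eq_succ n
  have : Nontrivial E := Module.nontrivial_of_finrank_eq_succ (R := ℝ) (n := n) Fact.out
  obtain ⟨v, hv⟩ := exists_norm_eq E zero_le_one
  have hv0 : v ≠ 0 := by rintro rfl; simp at hv
  have := isAddHaarMeasure_hausdorffMeasure_orthogonal_singleton (n := n) hv0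
  have hpos : 0 < μH[n] (ball (0 : (ℝ ∙ v)ᗮ) 1) := measure_ball_pos _ _ one_pos
  have hle : μH[n] (ball (0 : (ℝ ∙ v)ᗮ) 1) ≤ μH[n] (sphere (0 : E) 1) := calc
    _ ≤ μH[n] ((ℝ ∙ v)ᗮ.orthogonalProjectionOnto '' sphere (0 : E) 1) :=
        measure_mono (ball_subset_image_orthogonalProjectionOnto_sphere hv)
    _ ≤ 1 ^ (n : ℝ) * μH[n] (sphere (0 : E) 1) :=
        (ℝ ∙ v)ᗮ.lipschitzWith_orthogonalProjectionOnto.hausdorffMeasure_image_le n.cast_nonneg _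
    _ = μH[n] (sphere (0 : E) 1) := by simp
  exact (hpos.trans_le hle).ne'

instance isUniformOnUnitSphere_cond_hausdorffMeasure :
    IsUniformOnUnitSphere (ProbabilityTheory.cond μH[n] (sphere (0 : E) 1)) where
  toIsProbabilityMeasure := ProbabilityTheory.cond_isProbabilityMeasure_of_finite
    (hausdorffMeasure_unitSphere_ne_zero E) (hausdorffMeasure_unitSphere_ne_top E)
  measurePreserving e := by
    have hpreimage : e ⁻¹' sphere (0 : E) 1 = sphere 0 1 := by simp
    have hrestrict := (e.toIsometryEquiv.measurePreserving_hausdorffMeasure n).restrict_preimage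
      (isClosed_sphere (x := (0 : E)) (ε := 1)).measurableSet
    rw [LinearIsometryEquiv.coe_toIsometryEquiv, hpreimage] at hrestrict
    exact hrestrict.smul_measure _
  ae_mem_sphere := Measure.ae_smul_measure (ae_restrict_mem isClosed_sphere.measurableSet) _

end HausdorffSphere

section ODE

variable {F : Type*} [NormedAddCommGroup F] [NormedSpace ℝ F] {r : ℝ}

lemma eq_of_hasDerivAt_zero {f : ℝ → F} (hr : 0 ≤ r)
    (hf : ∀ s ∈ Set.Icc 0 r, HasDerivAt f 0 s) : f r = f 0 :=
  constant_of_has_deriv_right_zero (HasDerivAt.continuousOn hf)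
    (fun s hs => (hf s (Set.Ico_subset_Icc_self hs)).hasDerivWithinAt) r (Set.right_mem_Icc.2 hr)

lemma smul_eq_cosh_add_sinh_of_hasDerivAt (c : ℝ) {w w' : ℝ → F} (hr : 0 ≤ r)
    (hw : ∀ s ∈ Set.Icc 0 r, HasDerivAt w (w' s) s)
    (hw' : ∀ s ∈ Set.Icc 0 r, HasDerivAt w' (c ^ 2 • w s) s) :
    c • w r = (c * Real.cosh (c * r)) • w 0 + Real.sinh (c * r) • w' 0 := by
  have hcosh (s : ℝ) : HasDerivAt (fun s => Real.cosh (c * s)) (Real.sinh (c * s) * c) s := by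
    simpa using ((hasDerivAt_id s).const_mul c).cosh
  have hsinh (s : ℝ) : HasDerivAt (fun s => Real.sinh (c * s)) (Real.cosh (c * s) * c) s := by
    simpa using ((hasDerivAt_id s).const_mul c).sinh
  -- The Wronskians of `w` with the solutions `cosh (c s)` and `sinh (c s)` are constant.
  have wronskian_cosh := eq_of_hasDerivAt_zero hr
    (f := fun s => Real.cosh (c * s) • w' s - c • Real.sinh (c * s) • w s)
    fun s hs => (((hcosh s).smul (hw' s hs)).sub
      (((hsinh s).smul (hw s hs)).const_smul c)).congr_deriv (by module)
  have wronskian_sinh := eq_of_hasDerivAt_zero hr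
    (f := fun s => Real.sinh (c * s) • w' s - c • Real.cosh (c * s) • w s)
    fun s hs => (((hsinh s).smul (hw' s hs)).sub
      (((hcosh s).smul (hw s hs)).const_smul c)).congr_deriv (by module)
  simp only [mul_zero, Real.cosh_zero, Real.sinh_zero, one_smul, zero_smul, smul_zero, sub_zero,
    zero_sub] at wronskian_cosh wronskian_sinh
  calc c • w r
      = (c * (Real.cosh (c * r) ^ 2 - Real.sinh (c * r) ^ 2)) • w r := by
        rw [Real.cosh_sq_sub_sinh_sq, mul_one]
    _ = Real.sinh (c * r) • (Real.cosh (c * r) • w' r - c • Real.sinh (c * r) • w r) -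
          Real.cosh (c * r) • (Real.sinh (c * r) • w' r - c • Real.cosh (c * r) • w r) := by
        module
    _ = (c * Real.cosh (c * r)) • w 0 + Real.sinh (c * r) • w' 0 := by
        rw [wronskian_cosh, wronskian_sinh]; module

lemma smul_eq_sinh_smul_of_hasDerivAt (c : ℝ) {M M' M'' : ℝ → F} (hr : 0 ≤ r)
    (hM : ∀ s ∈ Set.Icc 0 r, HasDerivAt M (M' s) s)
    (hM' : ∀ s ∈ Set.Icc 0 r, HasDerivAt M' (M'' s) s)
    (hode : ∀ s ∈ Set.Icc 0 r, s • M'' s + (2 : ℝ) • M' s = (c ^ 2 * s) • M s) :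
    (c * r) • M r = Real.sinh (c * r) • M 0 := by
  have hw (s : ℝ) (hs : s ∈ Set.Icc 0 r) : HasDerivAt (fun s => s • M s) (M s + s • M' s) s :=
    ((hasDerivAt_id s).smul (hM s hs)).congr_deriv (by simp only [id]; module)
  have hw' (s : ℝ) (hs : s ∈ Set.Icc 0 r) :
      HasDerivAt (fun s => M s + s • M' s) (s • M'' s + (2 : ℝ) • M' s) s :=
    ((hM s hs).add ((hasDerivAt_id s).smul (hM' s hs))).congr_deriv (by simp only [id]; module)
  have key := smul_eq_cosh_add_sinh_of_hasDerivAt c hr hw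
    fun s hs => (hw' s hs).congr_deriv (by rw [hode s hs, mul_smul])
  simpa [mul_smul] using key

end ODE

section MeanValue

open scoped Laplacian

lemma sphereMean_eq_integral_cond_hausdorffMeasure (n : ℕ) (u : EuclideanSpace ℝ (Fin (n + 1)) → ℝ)
    (x : EuclideanSpace ℝ (Fin (n + 1))) (r : ℝ) :
    sphereMean (n + 1) u x r =
      ∫ y, u (x + r • y) ∂ProbabilityTheory.cond μH[n] (sphere 0 1) := by
  rw [sphereMean, setAverage_eq', ProbabilityTheory.cond, Nat.cast_succ, add_sub_cancel_right]

lemma laplacian_eq_of_differentiableAt_fderiv {m : ℕ} {u : EuclideanSpace ℝ (Fin m) → ℝ}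
    {x : EuclideanSpace ℝ (Fin m)} (hu : DifferentiableAt ℝ (fderiv ℝ u) x) :
    laplacian m u x = Δ u x := by
  rw [laplacian_eq_sum_fderiv_fderiv (EuclideanSpace.basisFun (Fin m) ℝ), laplacian]
  refine Finset.sum_congr rfl fun i _ => ?_
  simp [fderiv_clm_apply hu (differentiableAt_const _)]

open IsUniformOnUnitSphere in
theorem stmt_10_general {E F : Type*} [NormedAddCommGroup E] [InnerProductSpace ℝ E]
    [FiniteDimensional ℝ E] [MeasurableSpace E] [BorelSpace E] (hE : finrank ℝ E = 3)
    [NormedAddCommGroup F] [NormedSpace ℝ F] [CompleteSpace F]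
    {ν : Measure E} [IsUniformOnUnitSphere ν] {D : Set E} (hD : IsOpen D)
    {u : E → F} (hu : ContDiffOn ℝ 2 u D) {μ : ℝ} (hμ : μ ≠ 0)
    (hu_pan : ∀ x ∈ D, Δ u x - μ ^ 2 • u x = 0)
    {x : E} {r : ℝ} (hr : 0 < r) (hxr : closedBall x r ⊆ D) :
    ∫ y, u (x + r • y) ∂ν = (Real.sinh (μ * r) / (μ * r)) • u x := by
  have mem_D (s : ℝ) (hs : s ∈ Set.Icc 0 r) (y : E) (hy : y ∈ sphere (0 : E) 1) : x + s • y ∈ D :=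
    hxr (by simpa [norm_smul, mem_sphere_zero_iff_norm.1 hy, abs_of_nonneg hs.1] using hs.2)
  have hode (s : ℝ) (hs : s ∈ Set.Icc 0 r) :
      s • ∫ y, fderiv ℝ (fderiv ℝ u) (x + s • y) y y ∂ν +
        (2 : ℝ) • ∫ y, fderiv ℝ u (x + s • y) y ∂ν = (μ ^ 2 * s) • ∫ y, u (x + s • y) ∂ν := by
    have integral_laplacian : ∫ y, Δ u (x + s • y) ∂ν = μ ^ 2 • ∫ y, u (x + s • y) ∂ν := by
      rw [← integral_smul]
      exact integral_congr_ae ((ae_mem_sphere (ν := ν)).mono fun y hy =>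
        sub_eq_zero.1 (hu_pan _ (mem_D s hs y hy)))
    have key := darboux_equation (ν := ν) hD hu (mem_D s hs)
    rwa [integral_laplacian, smul_smul, mul_comm s, hE, Nat.cast_ofNat,
      show (3 : ℝ) - 1 = 2 by norm_num] at key
  have key := smul_eq_sinh_smul_of_hasDerivAt μ hr.le
    (fun s hs => hasDerivAt_integral_add_smul (ν := ν) hD (hu.of_le one_le_two) (mem_D s hs))
    (fun s hs => hasDerivAt_integral_fderiv_add_smul hD hu (mem_D s hs)) hode
  simp only [zero_smul, add_zero, integral_const, probReal_univ, one_smul] at key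
  rw [div_eq_inv_mul, mul_smul, ← key, inv_smul_smul₀ (mul_ne_zero hμ hr.ne')]

end MeanValue

/-- C. Neumann's mean value theorem: if `u` is panharmonic (`∇²u − μ²u = 0`) in a
domain `D ⊆ ℝ³`, then `M(x, r, u) = (sinh(μr)/(μr)) u(x)` for every admissible
sphere. -/
theorem stmt_10 (D : Set (EuclideanSpace ℝ (Fin 3)))
    (hD_open : IsOpen D) (hD_conn : IsConnected D)
    (u : EuclideanSpace ℝ (Fin 3) → ℝ)
    (hu_C2 : ContDiffOn ℝ 2 u D)
    (μ : ℝ) (hμ : μ ≠ 0)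
    (hu_pan : ∀ x ∈ D, laplacian 3 u x - μ ^ 2 * u x = 0) :
    ∀ x ∈ D, ∀ r > (0 : ℝ), closedBall x r ⊆ D →
      sphereMean 3 u x r = (Real.sinh (μ * r) / (μ * r)) * u x := by
  intro x _ r hr hxr
  have : Fact (finrank ℝ (EuclideanSpace ℝ (Fin 3)) = 2 + 1) := ⟨finrank_euclideanSpace_fin⟩
  rw [sphereMean_eq_integral_cond_hausdorffMeasure]
  exact stmt_10_general finrank_euclideanSpace_fin hD_open hu_C2 hμ
    (fun z hz => by
      rw [← laplacian_eq_of_differentiableAt_fderiv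
        (differentiableAt_fderiv_of_contDiffOn hD_open hu_C2 hz)]
      exact hu_pan z hz) hr hxr
end
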